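/- arXiv:2110.12031 — 4 statements merged into one kernel-verified Lean document; each statement's English description precedes it below -/
import Mathlib

section
/- Let (X, 𝒜, μ) be a σ-finite measure space and let (A_n)_{n∈ℕ} be an increasing sequence of measurable sets of finite measure with X = ∪_{n=1}^∞ A_n. Let 𝒮 denote the subspace of L¹(X,μ) consisting of integrable simple functions, and let D : 𝒮 → L¹(X,μ) be a linear map. Then D admits a (necessarily unique) extension to a doubly stochastic operator on L¹(X,μ) if and only if D is nonnegative (Dφ ≥ 0 a.e. whenever φ ≥ 0 a.e.) and for every measurable set E with μ(E) < ∞ one has (E1) ∫_X D(χ_E) dμ = μ(E) and (E2) lim_{n→∞} ∫_X χ_E · D(χ_{A_n}) dμ = μ(E). -/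
open MeasureTheory Filter Topology

attribute [local instance] MeasureTheory.Lp.simpleFunc.smul
  MeasureTheory.Lp.simpleFunc.module

section Aux
open scoped ENNReal InnerProductSpace

noncomputable def pair1 {X : Type*} [MeasurableSpace X] (μ : Measure X) :
    Lp ℝ 1 μ →L[ℝ] Lp ℝ ⊤ μ →L[ℝ] ℝ :=
  (ContinuousLinearMap.mul ℝ ℝ).lpPairing μ 1 ⊤

theorem pair1_apply {X : Type*} [MeasurableSpace X] (μ : Measure X)
    (f : Lp ℝ 1 μ) (g : Lp ℝ ⊤ μ) : pair1 μ f g = ∫ x, f x * g x ∂μ := by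
  simp [pair1, ContinuousLinearMap.lpPairing_eq_integral]

theorem pair1_indicator {X : Type*} [MeasurableSpace X] (μ : Measure X)
    {s : Set X} (hs : MeasurableSet s) (hμ : μ s ≠ ⊤) (g : Lp ℝ ⊤ μ) :
    pair1 μ (indicatorConstLp 1 hs hμ (1:ℝ)) g = ∫ x in s, g x ∂μ := by
  rw [pair1_apply, ← integral_indicator hs]
  refine integral_congr_ae ?_
  filter_upwards [indicatorConstLp_coeFn (p := 1) (hs := hs) (hμs := hμ) (c := (1:ℝ))] with x hx
  rw [hx]
  by_cases h : x ∈ s <;> simp [h]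

theorem indicator_smul' {X : Type*} [MeasurableSpace X] {μ : Measure X}
    {s : Set X} (hs : MeasurableSet s) (hμ : μ s ≠ ⊤) (c : ℝ) :
    indicatorConstLp 1 hs hμ c = c • indicatorConstLp 1 hs hμ (1:ℝ) := by
  apply Lp.ext
  filter_upwards [indicatorConstLp_coeFn (p := 1) (hs := hs) (hμs := hμ) (c := (1:ℝ)),
    indicatorConstLp_coeFn (p := 1) (hs := hs) (hμs := hμ) (c := c),
    Lp.coeFn_smul c (indicatorConstLp 1 hs hμ (1:ℝ))] with x h1 h2 h3
  rw [h2, h3, Pi.smul_apply, h1]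
  by_cases hx : x ∈ s <;> simp [hx]

theorem exists_L2_pos {X : Type*} [MeasurableSpace X] (μ : Measure X) [SigmaFinite μ] :
    ∃ w : X → ℝ, (∀ x, 0 < w x) ∧ Measurable w ∧ MemLp w 2 μ := by
  obtain ⟨g, gpos, gmeas, gint⟩ := exists_pos_lintegral_lt_of_sigmaFinite μ one_ne_zero
  have hm : Measurable fun x => Real.sqrt (g x) := gmeas.coe_nnreal_real.sqrt
  refine ⟨fun x => Real.sqrt (g x), fun x => Real.sqrt_pos.2 (by exact_mod_cast gpos x), hm, ?_⟩
  rw [memLp_two_iff_integrable_sq hm.aestronglyMeasurable]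
  simp only [Real.sq_sqrt (NNReal.coe_nonneg _)]
  refine ⟨gmeas.coe_nnreal_real.aestronglyMeasurable, ?_⟩
  rw [hasFiniteIntegral_iff_enorm]
  refine lt_of_eq_of_lt ?_ (gint.trans ENNReal.one_lt_top)
  simp [enorm_eq_nnnorm]

theorem dual_rep {X : Type*} [MeasurableSpace X] (μ : Measure X) [SigmaFinite μ]
    (Φ : Lp ℝ 1 μ →L[ℝ] ℝ) :
    ∃ h : Lp ℝ ⊤ μ, ‖h‖ ≤ ‖Φ‖ ∧ ∀ f, Φ f = pair1 μ f h := by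
  obtain ⟨w, wpos, wmeas, wL⟩ := exists_L2_pos μ
  let M : Lp ℝ 2 μ →L[ℝ] Lp ℝ 1 μ :=
    (ContinuousLinearMap.mul ℝ ℝ).holderL μ 2 2 1 (wL.toLp w)
  have hM : ∀ u : Lp ℝ 2 μ, M u =ᵐ[μ] fun x => w x * u x := by
    intro u
    have := (ContinuousLinearMap.mul ℝ ℝ).coeFn_holder (r := 1) (wL.toLp w) u
    filter_upwards [this, wL.coeFn_toLp] with x h1 h2
    simp [M, h1, h2]
  let v : Lp ℝ 2 μ := (InnerProductSpace.toDual ℝ (Lp ℝ 2 μ)).symm (Φ ∘L M)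
  have hv : ∀ u, ⟪v, u⟫_ℝ = Φ (M u) := fun u => by
    simp [v, InnerProductSpace.toDual_symm_apply]
  set C := ‖Φ‖ with hC
  have wint : ∀ s, MeasurableSet s → μ s < ⊤ → IntegrableOn w s μ := fun s hs hμ => by
    have := integrableOn_Lp_of_measure_ne_top (wL.toLp w) one_le_two hμ.ne
    exact this.congr (ae_restrict_of_ae wL.coeFn_toLp)
  have vint : ∀ s, MeasurableSet s → μ s < ⊤ → IntegrableOn v s μ := fun s hs hμ =>
    integrableOn_Lp_of_measure_ne_top v one_le_two hμ.ne
  have key : ∀ s, MeasurableSet s → μ s < ⊤ → |∫ x in s, v x ∂μ| ≤ C * ∫ x in s, w x ∂μ := by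
    intro s hs hμ
    rw [← L2.inner_indicatorConstLp_one (𝕜 := ℝ) hs hμ.ne v, real_inner_comm, hv]
    refine (Φ.le_opNorm _).trans_eq ?_
    congr 1
    rw [L1.norm_eq_integral_norm, ← integral_indicator hs]
    refine integral_congr_ae ?_
    filter_upwards [hM (indicatorConstLp 2 hs hμ.ne (1:ℝ)),
      indicatorConstLp_coeFn (p := 2) (hs := hs) (hμs := hμ.ne) (c := (1:ℝ))] with x h1 h2
    rw [h1, h2]
    by_cases h : x ∈ s <;> simp [h, abs_of_pos (wpos x)]
  have b1 : 0 ≤ᵐ[μ] fun x => C * w x - v x := by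
    refine ae_nonneg_of_forall_setIntegral_nonneg_of_sigmaFinite
      (fun s hs hμ => ((wint s hs hμ).const_mul C).sub (vint s hs hμ)) (fun s hs hμ => ?_)
    rw [integral_sub ((wint s hs hμ).const_mul C) (vint s hs hμ), integral_const_mul]
    linarith [(abs_le.1 (key s hs hμ)).2]
  have b2 : 0 ≤ᵐ[μ] fun x => C * w x + v x := by
    refine ae_nonneg_of_forall_setIntegral_nonneg_of_sigmaFinite
      (fun s hs hμ => ((wint s hs hμ).const_mul C).add (vint s hs hμ)) (fun s hs hμ => ?_)
    rw [integral_add ((wint s hs hμ).const_mul C) (vint s hs hμ), integral_const_mul]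
    linarith [(abs_le.1 (key s hs hμ)).1]
  have hb : ∀ᵐ x ∂μ, ‖v x / w x‖ ≤ C := by
    filter_upwards [b1, b2] with x h1 h2
    simp only [Pi.zero_apply] at h1 h2
    rw [Real.norm_eq_abs, abs_div, abs_of_pos (wpos x), div_le_iff₀ (wpos x), abs_le]
    constructor <;> linarith
  have hmeas : AEStronglyMeasurable (fun x => v x / w x) μ :=
    ((Lp.aestronglyMeasurable v).aemeasurable.div wmeas.aemeasurable).aestronglyMeasurable
  have hmem : MemLp (fun x => v x / w x) ⊤ μ := memLp_top_of_bound hmeas C hb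
  refine ⟨hmem.toLp _, ?_, ?_⟩
  · rw [Lp.norm_toLp]
    refine ENNReal.toReal_le_of_le_ofReal (norm_nonneg _) ?_
    rw [eLpNorm_exponent_top]
    exact eLpNormEssSup_le_of_ae_bound hb
  set h := hmem.toLp _ with hh
  have hind : ∀ s (hs : MeasurableSet s) (hμ : μ s < ⊤), 
      Φ (indicatorConstLp 1 hs hμ.ne (1:ℝ)) = pair1 μ (indicatorConstLp 1 hs hμ.ne (1:ℝ)) h := by
    intro s hs hμ
    let t : ℕ → Set X := fun n => s ∩ {x | 1 / ((n:ℝ) + 1) ≤ w x}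
    have ht : ∀ n, MeasurableSet (t n) := fun n => hs.inter (measurableSet_le measurable_const wmeas)
    have htμ : ∀ n, μ (t n) ≠ ⊤ := fun n =>
      ((measure_mono Set.inter_subset_left).trans_lt hμ).ne
    have heq : ∀ n, Φ (indicatorConstLp 1 (ht n) (htμ n) (1:ℝ))
        = pair1 μ (indicatorConstLp 1 (ht n) (htμ n) (1:ℝ)) h := by
      intro n
      have um : MemLp ((t n).indicator fun x => 1 / w x) 2 μ := by
        have : MemLp ((t n).indicator fun _ => ((n:ℝ)+1)) 2 μ :=
          memLp_indicator_const 2 (ht n) _ (Or.inr (htμ n))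
        refine this.mono ((measurable_const.div wmeas).indicator (ht n)).aestronglyMeasurable
          (Eventually.of_forall fun x => ?_)
        by_cases hx : x ∈ t n
        · have h2 : 1 / ((n:ℝ) + 1) ≤ w x := hx.2
          have hn : (0:ℝ) < n + 1 := by positivity
          simp only [hx, Set.indicator_of_mem]
          rw [Real.norm_eq_abs, Real.norm_eq_abs, abs_of_pos (one_div_pos.2 (wpos x)), abs_of_pos hn]
          exact (one_div_le hn (wpos x)).1 h2
        · simp [hx]
      have e1 : indicatorConstLp 1 (ht n) (htμ n) (1:ℝ) = M (um.toLp _) := by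
        apply Lp.ext
        filter_upwards [hM (um.toLp _), um.coeFn_toLp, indicatorConstLp_coeFn (p := 1) (hs := ht n)
          (hμs := htμ n) (c := (1:ℝ))] with x h1 h2 h3
        rw [h1, h2, h3]
        by_cases hx : x ∈ t n <;> simp [hx, (wpos x).ne']
      rw [pair1_indicator, e1, ← hv, L2.inner_def, ← integral_indicator (ht n)]
      refine integral_congr_ae ?_
      filter_upwards [um.coeFn_toLp, hmem.coeFn_toLp] with x h1 h2
      rw [h1]
      rw [← hh] at h2
      by_cases hx : x ∈ t n <;> simp [hx, h2, div_eq_mul_inv, mul_comm]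
    have hlim : Tendsto (fun n => indicatorConstLp 1 (ht n) (htμ n) (1:ℝ)) atTop
        (𝓝 (indicatorConstLp 1 hs hμ.ne (1:ℝ))) := by
      refine tendsto_indicatorConstLp_set ENNReal.one_ne_top ?_
      have e : ∀ n, symmDiff (t n) s = s \ t n := fun n =>
        symmDiff_of_le Set.inter_subset_left
      simp only [e]
      have hE : ⋂ n, s \ t n = ∅ := by
        rw [← Set.sdiff_iUnion, Set.sdiff_eq_empty]
        intro x hx
        obtain ⟨n, hn⟩ := exists_nat_one_div_lt (wpos x)
        exact Set.mem_iUnion.2 ⟨n, hx, hn.le⟩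
      rw [← measure_empty (μ := μ), ← hE]
      refine tendsto_measure_iInter_atTop (fun n => (hs.diff (ht n)).nullMeasurableSet) ?_
        ⟨0, ((measure_mono Set.sdiff_subset).trans_lt hμ).ne⟩
      intro m n hmn
      refine Set.sdiff_subset_sdiff_right (Set.inter_subset_inter_right _ fun x hx => ?_)
      have h0 : (m:ℝ) + 1 ≤ (n:ℝ) + 1 := by gcongr
      have h1 : (0:ℝ) < (m:ℝ) + 1 := by positivity
      exact (one_div_le_one_div_of_le h1 h0).trans hx
    have l1 := (Φ.continuous.tendsto _).comp hlim
    have l2 := (((pair1 μ).flip h).continuous.tendsto _).comp hlim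
    refine tendsto_nhds_unique l1 (l2.congr fun n => ?_)
    simp [heq n]
  intro f
  induction f using Lp.induction ENNReal.one_ne_top with
  | indicatorConst c hs hμ =>
    rw [Lp.simpleFunc.coe_indicatorConst]
    rw [indicator_smul' hs hμ.ne c, map_smul, map_smul, hind _ hs hμ]; rfl
  | add hf hg _ h1 h2 => rw [map_add, map_add, h1, h2]; rfl
  | isClosed => 
    exact isClosed_eq Φ.continuous ((pair1 μ).flip h).continuous

theorem pair1_inj {X : Type*} [MeasurableSpace X] (μ : Measure X) [SigmaFinite μ]
    {g₁ g₂ : Lp ℝ ⊤ μ} (h : ∀ f, pair1 μ f g₁ = pair1 μ f g₂) : g₁ = g₂ := by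
  rw [← sub_eq_zero]
  rw [Lp.eq_zero_iff_ae_eq_zero]
  refine ae_eq_zero_of_forall_setIntegral_eq_of_sigmaFinite
    (fun s hs hμ => integrableOn_Lp_of_measure_ne_top _ le_top hμ.ne) (fun s hs hμ => ?_)
  rw [← pair1_indicator μ hs hμ.ne, map_sub, h, sub_self]

theorem exists_adjoint {X : Type*} [MeasurableSpace X] (μ : Measure X) [SigmaFinite μ]
    (T : Lp ℝ 1 μ →L[ℝ] Lp ℝ 1 μ) :
    ∃ T' : Lp ℝ ⊤ μ →L[ℝ] Lp ℝ ⊤ μ, ∀ f g, pair1 μ (T f) g = pair1 μ f (T' g) := by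
  choose S hn hr using fun g => dual_rep μ ((pair1 μ).flip g ∘L T)
  replace hr : ∀ f g, pair1 μ (T f) g = pair1 μ f (S g) := fun f g => by simpa using hr g f
  let L : Lp ℝ ⊤ μ →ₗ[ℝ] Lp ℝ ⊤ μ :=
    { toFun := S
      map_add' := fun a b => pair1_inj μ fun f => by rw [map_add, ← hr, ← hr, ← hr, map_add]
      map_smul' := fun c a => pair1_inj μ fun f => by
        rw [RingHom.id_apply, map_smul, ← hr, ← hr, map_smul] }
  refine ⟨L.mkContinuous (‖(pair1 μ).flip‖ * ‖T‖) fun g => ?_, fun f g => hr f g⟩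
  refine (hn g).trans ((ContinuousLinearMap.opNorm_comp_le _ _).trans ?_)
  calc _ ≤ (‖(pair1 μ).flip‖ * ‖g‖) * ‖T‖ := by gcongr; exact ContinuousLinearMap.le_opNorm _ _
    _ = _ := by ring

theorem exists_ext {X : Type*} [MeasurableSpace X] (μ : Measure X)
    (D : Lp.simpleFunc ℝ 1 μ →ₗ[ℝ] Lp ℝ 1 μ)
    (hpos : ∀ φ : Lp.simpleFunc ℝ 1 μ,
        0 ≤ᵐ[μ] ((φ : Lp ℝ 1 μ) : X → ℝ) → 0 ≤ᵐ[μ] (D φ : X → ℝ))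
    (hE1 : ∀ E : Set X, ∀ (hE : MeasurableSet E) (hEfin : μ E < ⊤),
        ∫ x, (D (Lp.simpleFunc.indicatorConst 1 hE hEfin.ne (1 : ℝ)) : X → ℝ) x ∂μ
          = (μ E).toReal) :
    ∃ T : Lp ℝ 1 μ →L[ℝ] Lp ℝ 1 μ,
      (∀ φ : Lp.simpleFunc ℝ 1 μ, T ↑φ = D φ) ∧
      (∀ f : Lp ℝ 1 μ, 0 ≤ᵐ[μ] (f : X → ℝ) → 0 ≤ᵐ[μ] (T f : X → ℝ)) ∧
      (∀ f : Lp ℝ 1 μ, ∫ x, (T f : X → ℝ) x ∂μ = ∫ x, (f : X → ℝ) x ∂μ) := by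
  obtain ⟨I, hI⟩ : ∃ I : Lp ℝ 1 μ →L[ℝ] ℝ, ∀ f, I f = ∫ x, (f : X → ℝ) x ∂μ :=
    ⟨L1.integralCLM, fun f => by rw [← L1.integral_eq, L1.integral_eq_integral]⟩
  have hInteg : ∀ φ : Lp.simpleFunc ℝ 1 μ, I (D φ) = I φ := by
    intro φ
    induction φ using Lp.simpleFunc.induction one_ne_zero ENNReal.one_ne_top with
    | indicatorConst c hs hμ =>
      have : Lp.simpleFunc.indicatorConst 1 hs hμ.ne c
          = c • Lp.simpleFunc.indicatorConst 1 hs hμ.ne (1:ℝ) := by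
        apply Subtype.ext
        rw [Lp.simpleFunc.coe_smul, Lp.simpleFunc.coe_indicatorConst,
          Lp.simpleFunc.coe_indicatorConst]
        exact indicator_smul' hs hμ.ne c
      rw [this, Lp.simpleFunc.coe_smul, map_smul, map_smul, map_smul]
      congr 1
      rw [hI, hI, hE1 _ hs hμ, Lp.simpleFunc.coe_indicatorConst, integral_indicatorConstLp]
      simp [Measure.real]
    | add hf hg _ h1 h2 => rw [map_add, map_add, h1, h2, AddSubgroup.coe_add, map_add]
  have hnorm : ∀ φ : Lp.simpleFunc ℝ 1 μ, ‖D φ‖ ≤ ‖(φ : Lp ℝ 1 μ)‖ := by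
    intro φ
    have hm : MemLp ((Lp.simpleFunc.toSimpleFunc φ).map abs) 1 μ := by
      simpa using! (Lp.simpleFunc.memLp φ).abs
    let ψ : Lp.simpleFunc ℝ 1 μ := SimpleFunc.toLp _ hm
    have hψ : ((ψ : Lp ℝ 1 μ) : X → ℝ) =ᵐ[μ] fun x => |(φ : Lp ℝ 1 μ) x| := by
      have e : (ψ : Lp ℝ 1 μ) = hm.toLp _ := Lp.simpleFunc.toLp_eq_toLp _ hm
      rw [e]
      filter_upwards [hm.coeFn_toLp, Lp.simpleFunc.toSimpleFunc_eq_toFun φ] with x h1 h2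
      rw [h1, ← h2]; simp
    have p1 := hpos (ψ - φ) (by
      filter_upwards [hψ, Lp.coeFn_sub (ψ : Lp ℝ 1 μ) (φ : Lp ℝ 1 μ)] with x h1 h2
      rw [AddSubgroup.coe_sub, h2, Pi.sub_apply, h1]
      simpa using le_abs_self _)
    have p2 := hpos (ψ + φ) (by
      filter_upwards [hψ, Lp.coeFn_add (ψ : Lp ℝ 1 μ) (φ : Lp ℝ 1 μ)] with x h1 h2
      rw [AddSubgroup.coe_add, h2, Pi.add_apply, h1]
      have := neg_abs_le ((φ : Lp ℝ 1 μ) x)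
      simp only [Pi.zero_apply]; linarith)
    rw [map_sub] at p1
    rw [map_add] at p2
    have hle : (fun x => ‖D φ x‖) ≤ᵐ[μ] fun x => D ψ x := by
      filter_upwards [p1, p2, Lp.coeFn_sub (D ψ) (D φ), Lp.coeFn_add (D ψ) (D φ)] with x a b c d
      rw [c] at a
      rw [d] at b
      simp only [Pi.zero_apply, Pi.sub_apply, Pi.add_apply] at a b
      rw [Real.norm_eq_abs, abs_le]
      constructor <;> linarith
    calc ‖D φ‖ = ∫ x, ‖D φ x‖ ∂μ := L1.norm_eq_integral_norm _
      _ ≤ ∫ x, D ψ x ∂μ := integral_mono_ae (L1.integrable_coeFn _).norm (L1.integrable_coeFn _) hle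
      _ = ∫ x, (ψ : Lp ℝ 1 μ) x ∂μ := by rw [← hI, hInteg, hI]
      _ = ∫ x, ‖(φ : Lp ℝ 1 μ) x‖ ∂μ := integral_congr_ae hψ
      _ = _ := (L1.norm_eq_integral_norm _).symm
  let e : Lp.simpleFunc ℝ 1 μ →ₗ[ℝ] Lp ℝ 1 μ :=
    { toFun := fun φ => φ
      map_add' := fun a b => rfl
      map_smul' := fun c a => Lp.simpleFunc.coe_smul c a }
  have hd : DenseRange e := Lp.simpleFunc.denseRange ENNReal.one_ne_top
  have hn1 : ∀ φ, ‖D φ‖ ≤ 1 * ‖e φ‖ := fun φ => by rw [one_mul]; exact hnorm φ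
  have hT : ∀ φ : Lp.simpleFunc ℝ 1 μ, D.extendOfNorm e ↑φ = D φ :=
    fun φ => LinearMap.extendOfNorm_eq hd ⟨1, hn1⟩ φ
  have hTn : ∀ f, ‖D.extendOfNorm e f‖ ≤ ‖f‖ := fun f => by
    simpa using LinearMap.norm_extendOfNorm_apply_le hd 1 hn1 f
  have hTI : ∀ f, I (D.extendOfNorm e f) = I f := by
    intro f
    refine hd.induction_on f ?_ ?_
    · exact isClosed_eq (by fun_prop) (by fun_prop)
    · intro φ
      exact (congrArg I (hT φ)).trans (hInteg φ)
  generalize D.extendOfNorm e = T at *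
  refine ⟨T, hT, fun f hf => ?_, fun f => by rw [← hI, ← hI, hTI]⟩
  have i1 := L1.integrable_coeFn (T f)
  have h1 : ∫ x, (‖T f x‖ - T f x) ∂μ ≤ 0 := by
    rw [integral_sub i1.norm i1, ← L1.norm_eq_integral_norm, ← hI, hTI, hI]
    have : ∫ x, f x ∂μ = ‖f‖ := by
      rw [L1.norm_eq_integral_norm]
      refine integral_congr_ae ?_
      filter_upwards [hf] with x hx
      exact (Real.norm_of_nonneg hx).symm
    rw [this]; linarith [hTn f]
  have h0 : 0 ≤ fun x => ‖T f x‖ - T f x := fun x => by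
    simpa using le_abs_self _
  have h2 := (integral_eq_zero_iff_of_nonneg h0 (i1.norm.sub i1)).1
    (le_antisymm h1 (integral_nonneg h0))
  filter_upwards [h2] with x hx
  simp only [Pi.zero_apply] at hx ⊢
  have := norm_nonneg (T f x)
  linarith

end Aux

/-- **Construction of doubly stochastic operators.**  Let `(X,μ)` be σ-finite, exhausted by an
increasing sequence `Aₙ` of sets of finite measure, and let `D` be a linear map from the
subspace `𝒮` of integrable simple functions into `L¹(X,μ)`.  Then `D` extends to a doubly
stochastic operator on `L¹(X,μ)` (a positive, integral-preserving operator `T` which is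
semi-doubly stochastic and whose adjoint `T' : L^∞ → L^∞` preserves the integral of every
`g ∈ L¹ ∩ L^∞`) if and only if `D` is nonnegative, `∫ D χ_E dμ = μ(E)` for every set `E` of
finite measure, and `∫ χ_E · D χ_{Aₙ} dμ → μ(E)` as `n → ∞` for every such `E`. -/
theorem extension_to_doubly_stochastic_iff
    {X : Type*} [MeasurableSpace X] (μ : Measure X) [SigmaFinite μ]
    (A : ℕ → Set X) (hAmeas : ∀ n, MeasurableSet (A n)) (hAfin : ∀ n, μ (A n) < ⊤)
    (hAmono : Monotone A) (hAcover : ⋃ n, A n = Set.univ)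
    (D : Lp.simpleFunc ℝ 1 μ →ₗ[ℝ] Lp ℝ 1 μ) :
    (∃ T : Lp ℝ 1 μ →L[ℝ] Lp ℝ 1 μ,
      (∀ φ : Lp.simpleFunc ℝ 1 μ, T ↑φ = D φ) ∧
      (∀ f : Lp ℝ 1 μ, 0 ≤ᵐ[μ] (f : X → ℝ) → 0 ≤ᵐ[μ] (T f : X → ℝ)) ∧
      (∀ f : Lp ℝ 1 μ, ∫ x, (T f : X → ℝ) x ∂μ = ∫ x, (f : X → ℝ) x ∂μ) ∧
      (∀ E B : Set X, ∀ (_ : MeasurableSet E) (_ : μ E < ⊤) (hB : MeasurableSet B)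
        (hBfin : μ B < ⊤),
        ∫ x in E, (T (indicatorConstLp 1 hB hBfin.ne (1 : ℝ)) : X → ℝ) x ∂μ ≤ (μ E).toReal) ∧
      (∃ T' : Lp ℝ ⊤ μ →L[ℝ] Lp ℝ ⊤ μ,
        (∀ (f : Lp ℝ 1 μ) (g : Lp ℝ ⊤ μ),
          ∫ x, (T f : X → ℝ) x * (g : X → ℝ) x ∂μ
            = ∫ x, (f : X → ℝ) x * (T' g : X → ℝ) x ∂μ) ∧
        (∀ g : Lp ℝ ⊤ μ, Integrable (g : X → ℝ) μ →
          Integrable (T' g : X → ℝ) μ ∧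
          ∫ x, (T' g : X → ℝ) x ∂μ = ∫ x, (g : X → ℝ) x ∂μ)))
    ↔
    ((∀ φ : Lp.simpleFunc ℝ 1 μ,
        0 ≤ᵐ[μ] ((φ : Lp ℝ 1 μ) : X → ℝ) → 0 ≤ᵐ[μ] (D φ : X → ℝ)) ∧
     (∀ E : Set X, ∀ (hE : MeasurableSet E) (hEfin : μ E < ⊤),
        ∫ x, (D (Lp.simpleFunc.indicatorConst 1 hE hEfin.ne (1 : ℝ)) : X → ℝ) x ∂μ
          = (μ E).toReal) ∧
     (∀ E : Set X, MeasurableSet E → μ E < ⊤ →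
        Tendsto
          (fun n => ∫ x in E,
            (D (Lp.simpleFunc.indicatorConst 1 (hAmeas n) (hAfin n).ne (1 : ℝ)) : X → ℝ) x ∂μ)
          atTop (𝓝 (μ E).toReal))) := by
  have hcov : AECover μ atTop A := by
    refine ⟨Eventually.of_forall fun x => ?_, hAmeas⟩
    have hx : x ∈ ⋃ n, A n := by rw [hAcover]; trivial
    obtain ⟨m, hm⟩ := Set.mem_iUnion.1 hx
    exact (eventually_ge_atTop m).mono fun n hn => hAmono hn hm
  constructor
  · rintro ⟨T, hTD, hpos, hInteg, -, T', hadj, hT'⟩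
    refine ⟨fun φ hφ => hTD φ ▸ hpos _ hφ, fun E hE hμ => ?_, fun E hE hμ => ?_⟩
    · rw [← hTD, hInteg, Lp.simpleFunc.coe_indicatorConst, integral_indicatorConstLp]
      simp [Measure.real]
    · let g : Lp ℝ ⊤ μ := indicatorConstLp ⊤ hE hμ.ne (1:ℝ)
      have hg := indicatorConstLp_coeFn (p := ⊤) (hs := hE) (hμs := hμ.ne) (c := (1:ℝ))
      have gint : Integrable g μ :=
        ((integrable_indicator_iff hE).2 (integrableOn_const hμ.ne)).congr hg.symm
      have h1 := hcov.integral_tendsto_of_countably_generated (hT' g gint).1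
      rw [(hT' g gint).2, integral_indicatorConstLp, smul_eq_mul, mul_one] at h1
      refine h1.congr fun n => ?_
      rw [← pair1_indicator μ (hAmeas n) (hAfin n).ne, pair1_apply, ← hadj, ← hTD,
        Lp.simpleFunc.coe_indicatorConst, ← integral_indicator hE]
      refine integral_congr_ae ?_
      filter_upwards [hg] with x hx
      rw [hx]
      by_cases h : x ∈ E <;> simp [h]
  · rintro ⟨hDpos, hE1, hE2⟩
    obtain ⟨T, hTD, hpos, hInteg⟩ := exists_ext μ D hDpos hE1
    obtain ⟨T', hadj⟩ := exists_adjoint μ T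
    have hmono : ∀ f g : Lp ℝ 1 μ, f ≤ᵐ[μ] g → T f ≤ᵐ[μ] T g := by
      intro f g h
      have := hpos (g - f) (by
        filter_upwards [h, Lp.coeFn_sub g f] with x h1 h2
        rw [h2]; simpa using h1)
      rw [map_sub] at this
      filter_upwards [this, Lp.coeFn_sub (T g) (T f)] with x h1 h2
      rw [h2] at h1
      simpa using h1
    have hindmono : ∀ {B C : Set X} (hB : MeasurableSet B) (hBf : μ B ≠ ⊤) (hC : MeasurableSet C)
        (hCf : μ C ≠ ⊤), B ⊆ C → T (indicatorConstLp 1 hB hBf (1:ℝ)) ≤ᵐ[μ]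
          T (indicatorConstLp 1 hC hCf (1:ℝ)) := by
      intro B C hB hBf hC hCf hBC
      apply hmono
      filter_upwards [indicatorConstLp_coeFn (p := 1) (hs := hB) (hμs := hBf) (c := (1:ℝ)),
        indicatorConstLp_coeFn (p := 1) (hs := hC) (hμs := hCf) (c := (1:ℝ))] with x h1 h2
      rw [h1, h2]
      exact Set.indicator_le_indicator_of_subset hBC (fun _ => zero_le_one) x
    let a : ℕ → Lp ℝ 1 μ := fun n => T (indicatorConstLp 1 (hAmeas n) (hAfin n).ne (1:ℝ))
    have haE : ∀ E : Set X, MeasurableSet E → μ E < ⊤ →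
        Tendsto (fun n => ∫ x in E, a n x ∂μ) atTop (𝓝 (μ E).toReal) := by
      intro E hE hμ
      refine (hE2 E hE hμ).congr fun n => ?_
      rw [← hTD, Lp.simpleFunc.coe_indicatorConst]
    have hamono : ∀ m n, m ≤ n → a m ≤ᵐ[μ] a n := fun m n hmn =>
      hindmono _ _ _ _ (hAmono hmn)
    have haint : ∀ n, Integrable (a n) μ := fun n => L1.integrable_coeFn _
    have haEle : ∀ n, ∀ E : Set X, MeasurableSet E → μ E < ⊤ →
        ∫ x in E, a n x ∂μ ≤ (μ E).toReal := by
      intro n E hE hμ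
      refine Monotone.ge_of_tendsto (f := fun n => ∫ x in E, a n x ∂μ) ?_ (haE E hE hμ) n
      intro m k hmk
      exact setIntegral_mono_ae (haint m).integrableOn (haint k).integrableOn (hamono m k hmk)
    have hsemi : ∀ E B : Set X, ∀ (_ : MeasurableSet E) (_ : μ E < ⊤) (hB : MeasurableSet B)
        (hBfin : μ B < ⊤),
        ∫ x in E, (T (indicatorConstLp 1 hB hBfin.ne (1 : ℝ)) : X → ℝ) x ∂μ ≤ (μ E).toReal := by
      intro E B hE hEμ hB hBμ
      have htμ : ∀ n, μ (B ∩ A n) ≠ ⊤ := fun n =>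
        ((measure_mono Set.inter_subset_left).trans_lt hBμ).ne
      have ht : ∀ n, MeasurableSet (B ∩ A n) := fun n => hB.inter (hAmeas n)
      have hlim : Tendsto (fun n => indicatorConstLp 1 (ht n) (htμ n) (1:ℝ)) atTop
          (𝓝 (indicatorConstLp 1 hB hBμ.ne (1:ℝ))) := by
        refine tendsto_indicatorConstLp_set ENNReal.one_ne_top ?_
        have e : ∀ n, symmDiff (B ∩ A n) B = B \ (B ∩ A n) := fun n =>
          symmDiff_of_le Set.inter_subset_left
        simp only [e]
        have hE : ⋂ n, B \ (B ∩ A n) = ∅ := by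
          rw [← Set.sdiff_iUnion, ← Set.inter_iUnion, hAcover]
          simp
        rw [← measure_empty (μ := μ), ← hE]
        refine tendsto_measure_iInter_atTop (fun n => (hB.diff (ht n)).nullMeasurableSet) ?_
          ⟨0, ((measure_mono Set.sdiff_subset).trans_lt hBμ).ne⟩
        intro m n hmn
        exact Set.sdiff_subset_sdiff_right (Set.inter_subset_inter_right _ (hAmono hmn))
      have h1 := (((continuous_setIntegral (μ := μ) (E := ℝ) E).comp T.continuous).tendsto _).comp hlim
      refine le_of_tendsto h1 (Eventually.of_forall fun n => ?_)
      refine le_trans ?_ (haEle n E hE hEμ)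
      exact setIntegral_mono_ae (L1.integrable_coeFn _).integrableOn (haint n).integrableOn
        (hindmono _ _ _ _ Set.inter_subset_right)
    have ha1 : ∀ n, ∀ᵐ x ∂μ, a n x ≤ 1 := by
      intro n
      have : 0 ≤ᵐ[μ] fun x => 1 - a n x := by
        refine ae_nonneg_of_forall_setIntegral_nonneg_of_sigmaFinite
          (fun s hs hμ => (integrableOn_const hμ.ne).sub (haint n).integrableOn)
          (fun s hs hμ => ?_)
        have ic : Integrable (fun _ : X => (1:ℝ)) (μ.restrict s) := integrableOn_const hμ.ne
        rw [integral_sub ic (haint n).integrableOn]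
        have := haEle n s hs hμ
        simp only [integral_const, Measure.real, Measure.restrict_apply MeasurableSet.univ,
          Set.univ_inter, smul_eq_mul, mul_one]
        linarith
      filter_upwards [this] with x hx
      simpa using hx
    have ha0 : ∀ n, ∀ᵐ x ∂μ, 0 ≤ a n x := by
      intro n
      refine hpos _ ?_
      filter_upwards [indicatorConstLp_coeFn (p := 1) (hs := hAmeas n) (hμs := (hAfin n).ne)
        (c := (1:ℝ))] with x hx
      rw [hx]
      exact Set.indicator_nonneg (fun _ _ => zero_le_one) x
    have hconv : ∀ᵐ x ∂μ, Tendsto (fun n => a n x) atTop (𝓝 1) := by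
      have hm : ∀ m, ∀ᵐ x ∂μ, x ∈ A m → Tendsto (fun n => a n x) atTop (𝓝 1) := by
        intro m
        rw [← ae_restrict_iff' (hAmeas m)]
        refine tendsto_of_integral_tendsto_of_monotone (F := fun _ => (1:ℝ))
          (fun n => (haint n).integrableOn) (integrableOn_const (hAfin m).ne) ?_ ?_ ?_
        · convert haE (A m) (hAmeas m) (hAfin m) using 2
          simp [Measure.real]
        · have : ∀ᵐ x ∂μ, ∀ i j, i ≤ j → a i x ≤ a j x := by
            rw [ae_all_iff]; intro i
            rw [ae_all_iff]; intro j
            by_cases hij : i ≤ j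
            · filter_upwards [hamono i j hij] with x hx _ using hx
            · exact Eventually.of_forall fun x h => absurd h hij
          exact ae_restrict_of_ae (this.mono fun x hx i j hij => hx i j hij)
        · exact ae_restrict_of_ae (ae_all_iff.2 ha1)
      filter_upwards [ae_all_iff.2 hm] with x hx
      have hxA : x ∈ ⋃ n, A n := by rw [hAcover]; trivial
      obtain ⟨m, hm⟩ := Set.mem_iUnion.1 hxA
      exact hx m hm
    have hT'loc : ∀ (g : Lp ℝ ⊤ μ) (s : Set X), μ s < ⊤ → IntegrableOn (T' g) s μ :=
      fun g s hμ => integrableOn_Lp_of_measure_ne_top _ le_top hμ.ne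
    have hT'pos : ∀ g : Lp ℝ ⊤ μ, 0 ≤ᵐ[μ] g → 0 ≤ᵐ[μ] T' g := by
      intro g hg
      refine ae_nonneg_of_forall_setIntegral_nonneg_of_sigmaFinite
        (fun s hs hμ => hT'loc g s hμ) (fun s hs hμ => ?_)
      rw [← pair1_indicator μ hs hμ.ne, ← hadj, pair1_apply]
      refine integral_nonneg_of_ae ?_
      have h0 : 0 ≤ᵐ[μ] T (indicatorConstLp 1 hs hμ.ne (1:ℝ)) := by
        refine hpos _ ?_
        filter_upwards [indicatorConstLp_coeFn (p := 1) (hs := hs) (hμs := hμ.ne)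
          (c := (1:ℝ))] with x hx
        rw [hx]
        exact Set.indicator_nonneg (fun _ _ => zero_le_one) x
      filter_upwards [hg, h0] with x h1 h2
      exact mul_nonneg h2 h1
    have hlim : ∀ g : Lp ℝ ⊤ μ, Integrable g μ →
        Tendsto (fun n => ∫ x in A n, T' g x ∂μ) atTop (𝓝 (∫ x, g x ∂μ)) := by
      intro g hg
      have h1 : Tendsto (fun n => ∫ x, a n x * g x ∂μ) atTop (𝓝 (∫ x, g x ∂μ)) := by
        refine tendsto_integral_of_dominated_convergence (fun x => ‖g x‖)
          (fun n => (haint n).aestronglyMeasurable.mul hg.aestronglyMeasurable) hg.norm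
          (fun n => ?_) ?_
        · filter_upwards [ha0 n, ha1 n] with x h0 h1
          rw [norm_mul, Real.norm_of_nonneg h0]
          exact mul_le_of_le_one_left (norm_nonneg _) h1
        · filter_upwards [hconv] with x hx
          simpa using hx.mul_const (g x)
      refine h1.congr fun n => ?_
      rw [← pair1_indicator μ (hAmeas n) (hAfin n).ne, ← hadj, pair1_apply]
    refine ⟨T, hTD, hpos, hInteg, hsemi, T', fun f g => ?_, fun g hg => ?_⟩
    · rw [← pair1_apply, hadj, pair1_apply]
    · have hgi : Integrable (T' g) μ := by
        have habs := Lp.coeFn_abs g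
        have hai : Integrable (|g| : Lp ℝ ⊤ μ) μ := hg.abs.congr habs.symm
        have hap : 0 ≤ᵐ[μ] T' |g| := hT'pos _ (by
          filter_upwards [habs] with x hx
          rw [hx]; exact abs_nonneg _)
        have hi : Integrable (T' |g|) μ := hcov.integrable_of_integral_tendsto_of_nonneg_ae _
          (fun n => hT'loc _ _ (hAfin n)) hap (hlim _ hai)
        have p1 := hT'pos (|g| - g) (by
          filter_upwards [habs, Lp.coeFn_sub |g| g] with x h1 h2
          rw [h2, Pi.sub_apply, h1]
          simpa using le_abs_self _)
        have p2 := hT'pos (|g| + g) (by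
          filter_upwards [habs, Lp.coeFn_add |g| g] with x h1 h2
          rw [h2, Pi.add_apply, h1]
          have := neg_abs_le (g x)
          simp only [Pi.zero_apply]; linarith)
        rw [map_sub] at p1
        rw [map_add] at p2
        refine hi.mono' (Lp.aestronglyMeasurable _) ?_
        filter_upwards [p1, p2, Lp.coeFn_sub (T' |g|) (T' g), Lp.coeFn_add (T' |g|) (T' g)]
          with x a b c d
        rw [c] at a
        rw [d] at b
        simp only [Pi.zero_apply, Pi.sub_apply, Pi.add_apply] at a b
        rw [Real.norm_eq_abs, abs_le]
        constructor <;> linarith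
      exact ⟨hgi, hcov.integral_eq_of_tendsto _ hgi (hlim g hg)⟩
end

section
/- Let (X, μ) be a finite measure space and f ∈ L¹(X,μ) nonnegative. Then the set S_f = {Sf : S a semi-doubly stochastic operator on L¹(X,μ)} is relatively weakly compact in L¹(X,μ), i.e. the closure of S_f in the weak topology σ(L¹, L^∞) is weakly compact. -/
open MeasureTheory

/-- `T : L¹(X,μ) → L¹(X,μ)` is a semi-doubly stochastic operator: it is positive,
integral preserving, and `∫_E T χ_B dμ ≤ μ(E)` for all measurable sets `E, B` of finite
measure. -/
def IsSemiDoublyStochastic {X : Type*} [MeasurableSpace X] {μ : Measure X}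
    (T : Lp ℝ 1 μ →L[ℝ] Lp ℝ 1 μ) : Prop :=
  (∀ f : Lp ℝ 1 μ, 0 ≤ᵐ[μ] (f : X → ℝ) → 0 ≤ᵐ[μ] (T f : X → ℝ)) ∧
  (∀ f : Lp ℝ 1 μ, ∫ x, (T f : X → ℝ) x ∂μ = ∫ x, (f : X → ℝ) x ∂μ) ∧
  (∀ E B : Set X, ∀ (_ : MeasurableSet E) (_ : μ E < ⊤) (hB : MeasurableSet B)
    (hBfin : μ B < ⊤),
    ∫ x in E, (T (indicatorConstLp 1 hB hBfin.ne (1 : ℝ)) : X → ℝ) x ∂μ ≤ (μ E).toReal)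

open scoped Pointwise in
theorem groth_aux {E H : Type*} [NormedAddCommGroup E] [NormedSpace ℝ E] [CompleteSpace E]
    [NormedAddCommGroup H] [InnerProductSpace ℝ H] [CompleteSpace H] (T : H →L[ℝ] E) (A : Set E)
    (hA : ∀ ε : ℝ, 0 < ε → ∃ r : ℝ, ∀ a ∈ A, ∃ g : H, ‖g‖ ≤ r ∧ ‖a - T g‖ ≤ ε) :
    IsCompact (closure (toWeakSpace ℝ E '' A)) := by
  apply NormedSpace.isCompact_closure_of_isBounded
  · obtain ⟨r, hr⟩ := hA 1 one_pos
    rw [Set.preimage_image_eq _ (toWeakSpace ℝ E).injective]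
    refine isBounded_iff_forall_norm_le.2 ⟨‖T‖ * r + 1, fun a ha => ?_⟩
    obtain ⟨g, hg, hag⟩ := hr a ha
    have h1 : ‖a‖ ≤ ‖T g‖ + ‖a - T g‖ := by
      simpa using norm_add_le (T g) (a - T g)
    have h2 := T.le_opNorm g
    have h3 : ‖T‖ * ‖g‖ ≤ ‖T‖ * r := by gcongr
    linarith
  · intro y hy
    let y' : StrongDual ℝ (StrongDual ℝ E) := WeakDual.toStrongDual y
    let J := NormedSpace.inclusionInDoubleDualLi (E := E) ℝ
    have hcl : IsClosed (Set.range J) := by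
      have := J.isometry.isUniformInducing.isComplete_range
      exact this.isClosed
    have hmem : y' ∈ Set.range J := by
      rw [← hcl.closure_eq]
      refine (Metric.mem_closure_iff (α := StrongDual ℝ (StrongDual ℝ E))).2 ?_
      intro ε hε
      obtain ⟨r, hr⟩ := hA (ε / 2) (half_pos hε)
      -- the weak* continuous map from the dual of H
      let L : StrongDual ℝ E →L[ℝ] H :=
        { toFun := fun φ =>
            (InnerProductSpace.toDual ℝ H).symm ((ContinuousLinearMap.compL ℝ H E ℝ).flip T φ)
          map_add' := fun a b => by simp only [map_add]
          map_smul' := fun c a => by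
            rw [map_smul, (InnerProductSpace.toDual ℝ H).symm.map_smulₛₗ]
            simp
          cont := (InnerProductSpace.toDual ℝ H).symm.continuous.comp
            ((ContinuousLinearMap.compL ℝ H E ℝ).flip T).continuous }
      have hL : ∀ (φ : StrongDual ℝ E) (g : H), inner ℝ (L φ) g = φ (T g) := by
        intro φ g
        change inner ℝ ((InnerProductSpace.toDual ℝ H).symm (φ.comp T)) g = φ (T g)
        rw [InnerProductSpace.toDual_symm_apply]
        rfl
      let Φ : WeakDual ℝ H → WeakDual ℝ (StrongDual ℝ E) := fun h =>
        StrongDual.toWeakDual ((WeakDual.toStrongDual h).comp L)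
      have hΦ : Continuous Φ := by
        refine WeakDual.continuous_of_continuous_eval fun φ => ?_
        exact WeakDual.eval_continuous (L φ)
      let K := Φ '' (WeakDual.toStrongDual ⁻¹' Metric.closedBall (0 : StrongDual ℝ H) r)
      have hK : IsCompact K := (WeakDual.isCompact_closedBall 0 r).image hΦ
      let B : Set (WeakDual ℝ (StrongDual ℝ E)) :=
        WeakDual.toStrongDual ⁻¹' Metric.closedBall (0 : StrongDual ℝ (StrongDual ℝ E)) (ε / 2)
      have hB : IsCompact B := WeakDual.isCompact_closedBall 0 (ε / 2)
      have hKB := (hK.add hB).isClosed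
      have hsub : NormedSpace.inclusionInDoubleDualWeak ℝ E '' (toWeakSpace ℝ E '' A) ⊆ K + B := by
        rintro _ ⟨_, ⟨a, ha, rfl⟩, rfl⟩
        obtain ⟨g, hg, hag⟩ := hr a ha
        refine Set.mem_add.2 ⟨Φ (StrongDual.toWeakDual (InnerProductSpace.toDual ℝ H g)),
          ⟨_, ?_, rfl⟩, StrongDual.toWeakDual (J (a - T g)), ?_, ?_⟩
        · simpa using hg
        · refine (mem_closedBall_zero_iff (E := StrongDual ℝ (StrongDual ℝ E))).2 ?_
          exact (J.norm_map (a - T g)).trans_le hag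
        · apply DFunLike.ext
          intro φ
          change inner ℝ g (L φ) + φ (a - T g) = φ a
          rw [real_inner_comm, hL]
          simp
      obtain ⟨k, ⟨h, hh, rfl⟩, b, hb, hy2⟩ := Set.mem_add.1 (closure_minimal hsub hKB hy)
      refine ⟨_, ⟨T ((InnerProductSpace.toDual ℝ H).symm (WeakDual.toStrongDual h)), rfl⟩, ?_⟩
      have hJ : J (T ((InnerProductSpace.toDual ℝ H).symm (WeakDual.toStrongDual h)))
          = WeakDual.toStrongDual (Φ h) := by
        apply ContinuousLinearMap.ext
        intro φ
        change φ (T _) = (WeakDual.toStrongDual h) (L φ)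
        rw [← hL, real_inner_comm]
        simp
      rw [hJ]
      refine lt_of_eq_of_lt (dist_eq_norm (E := StrongDual ℝ (StrongDual ℝ E)) _ _) ?_
      have : y' - WeakDual.toStrongDual (Φ h) = WeakDual.toStrongDual b := by
        simp only [y', ← hy2, map_add]
        abel
      rw [this]
      have hb' : ‖WeakDual.toStrongDual b‖ ≤ ε / 2 :=
        (mem_closedBall_zero_iff (E := StrongDual ℝ (StrongDual ℝ E))).1 hb
      linarith
    obtain ⟨x, hx⟩ := hmem
    refine ⟨toWeakSpace ℝ E x, ?_⟩
    apply DFunLike.ext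
    intro φ
    exact DFunLike.congr_fun hx φ

theorem sds_approx {X : Type*} [MeasurableSpace X] (μ : Measure X) [IsFiniteMeasure μ]
    (f : Lp ℝ 1 μ) (hf : 0 ≤ᵐ[μ] (f : X → ℝ)) (ε : ℝ) (hε : 0 < ε) :
    ∃ M : ℝ, 0 ≤ M ∧ ∀ S : Lp ℝ 1 μ →L[ℝ] Lp ℝ 1 μ, IsSemiDoublyStochastic S →
      ∃ g : Lp ℝ 1 μ, (∀ᵐ x ∂μ, ‖g x‖ ≤ M) ∧ ‖S f - g‖ ≤ ε := by
  obtain ⟨M, hM0, hM⟩ := (Lp.memLp f).integral_indicator_norm_ge_nonneg_le_of_meas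
    (Lp.stronglyMeasurable f) hε
  have hmeas : MeasurableSet {x | M ≤ ‖f x‖₊} :=
    measurableSet_le measurable_const (Lp.stronglyMeasurable f).measurable.norm
  set D : Set X := {x | M ≤ ‖f x‖₊} with hD
  have hr : MemLp (D.indicator f) 1 μ := (Lp.memLp f).indicator hmeas
  have hs : MemLp (Dᶜ.indicator f) 1 μ := (Lp.memLp f).indicator hmeas.compl
  let r : Lp ℝ 1 μ := hr.toLp
  let s : Lp ℝ 1 μ := hs.toLp
  have hfrs : f = s + r := by
    apply Lp.ext
    filter_upwards [Lp.coeFn_add s r, hr.coeFn_toLp, hs.coeFn_toLp] with x h1 h2 h3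
    rw [h1, Pi.add_apply, h2, h3]
    by_cases hx : x ∈ D <;> simp [hx]
  have hr0 : 0 ≤ᵐ[μ] (r : X → ℝ) := by
    filter_upwards [hr.coeFn_toLp, hf] with x h2 h3
    rw [h2]
    exact Set.indicator_apply_nonneg fun _ => h3
  have hs0 : 0 ≤ᵐ[μ] (s : X → ℝ) := by
    filter_upwards [hs.coeFn_toLp, hf] with x h2 h3
    rw [h2]
    exact Set.indicator_apply_nonneg fun _ => h3
  have hnorm : ∀ u : Lp ℝ 1 μ, 0 ≤ᵐ[μ] (u : X → ℝ) → ‖u‖ = ∫ x, u x ∂μ := by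
    intro u hu
    rw [L1.norm_eq_integral_norm]
    apply integral_congr_ae
    filter_upwards [hu] with x hx
    exact Real.norm_of_nonneg hx
  have hrε : ‖r‖ ≤ ε := by
    rw [Lp.norm_toLp, eLpNorm_one_eq_lintegral_enorm]
    exact ENNReal.toReal_le_of_le_ofReal hε.le hM
  refine ⟨M, hM0, fun S ⟨hpos, hint, hsub⟩ => ⟨S s, ?_, ?_⟩⟩
  · let one : Lp ℝ 1 μ :=
      indicatorConstLp 1 MeasurableSet.univ (measure_lt_top μ Set.univ).ne (1 : ℝ)
    have hone : (one : X → ℝ) =ᵐ[μ] fun _ => 1 := by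
      filter_upwards [indicatorConstLp_coeFn (p := 1) (hs := MeasurableSet.univ)
        (hμs := (measure_lt_top μ Set.univ).ne) (c := (1 : ℝ))] with x hx
      rw [hx]; simp
    have hS1 : (S one : X → ℝ) ≤ᵐ[μ] fun _ => 1 := by
      apply ae_le_of_forall_setIntegral_le (L1.integrable_coeFn _) (integrable_const _)
      intro E hE hEfin
      have := hsub E Set.univ hE hEfin MeasurableSet.univ (measure_lt_top μ _)
      refine this.trans (le_of_eq ?_)
      simp [Measure.real]
    have h0 := hpos s hs0
    have h1 : 0 ≤ᵐ[μ] (S ((M : ℝ) • one - s) : X → ℝ) := by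
      apply hpos
      filter_upwards [Lp.coeFn_sub ((M : ℝ) • one) s, Lp.coeFn_smul (M : ℝ) one, hone,
        hs.coeFn_toLp, hf] with x a1 a2 a3 a4 a5
      rw [a1, Pi.sub_apply, a2, Pi.smul_apply, a3, a4]
      by_cases hx : x ∈ D
      · simpa [hx] using hM0
      · have : ‖f x‖₊ < M := not_le.1 hx
        have : ‖f x‖ < M := this
        have := Real.le_norm_self (f x)
        simp [hx]; linarith
    rw [map_sub, map_smul] at h1
    filter_upwards [h0, h1, hS1, Lp.coeFn_sub ((M : ℝ) • S one) (S s),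
      Lp.coeFn_smul (M : ℝ) (S one)] with x b0 b1 b2 b3 b4
    rw [b3, Pi.sub_apply, b4, Pi.smul_apply] at b1
    rw [Real.norm_of_nonneg b0]
    simp at b1
    nlinarith [hM0]
  · rw [hfrs, map_add, add_sub_cancel_left, hnorm _ (hpos r hr0), hint, ← hnorm _ hr0]
    exact hrε

/-- For a finite measure space `(X,μ)` and a nonnegative `f ∈ L¹(X,μ)`, the set
`S_f = {Sf : S semi-doubly stochastic}` is relatively weakly compact in `L¹(X,μ)`:
its closure in the weak topology `σ(L¹, L^∞)` (the weak topology of the Banach space `L¹`,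
whose dual for finite measures is `L^∞`) is compact. -/
theorem relativelyWeaklyCompact_semiDoublyStochastic_orbit
    {X : Type*} [MeasurableSpace X] (μ : Measure X) [IsFiniteMeasure μ]
    (f : Lp ℝ 1 μ) (hf : 0 ≤ᵐ[μ] (f : X → ℝ)) :
    IsCompact (closure
      (toWeakSpace ℝ (Lp ℝ 1 μ) ''
        {g : Lp ℝ 1 μ | ∃ S : Lp ℝ 1 μ →L[ℝ] Lp ℝ 1 μ, IsSemiDoublyStochastic S ∧ S f = g})) := by
  let one : Lp ℝ 2 μ :=
    indicatorConstLp 2 MeasurableSet.univ (measure_lt_top μ Set.univ).ne (1 : ℝ)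
  let T : Lp ℝ 2 μ →L[ℝ] Lp ℝ 1 μ := (ContinuousLinearMap.mul ℝ ℝ).holderL μ 2 2 1 one
  have hT : ∀ g : Lp ℝ 2 μ, (T g : X → ℝ) =ᵐ[μ] g := by
    intro g
    filter_upwards [indicatorConstLp_coeFn (p := 2) (hs := MeasurableSet.univ)
        (hμs := (measure_lt_top μ Set.univ).ne) (c := (1 : ℝ)),
      (ContinuousLinearMap.mul ℝ ℝ).coeFn_holder (r := 1) one g] with x hx h2
    refine h2.trans ?_
    rw [hx]; simp
  refine groth_aux T _ fun ε hε => ?_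
  obtain ⟨M, hM0, hM⟩ := sds_approx μ f hf ε hε
  refine ⟨μ.real Set.univ ^ (2 : ENNReal).toReal⁻¹ * M, ?_⟩
  · rintro _ ⟨S, hS, rfl⟩
    obtain ⟨g, hg, hgε⟩ := hM S hS
    have hg2 : MemLp g 2 μ := MemLp.of_bound (Lp.aestronglyMeasurable g) M hg
    refine ⟨hg2.toLp, Lp.norm_le_of_ae_bound (C := M) hM0 ?_, ?_⟩
    · filter_upwards [hg2.coeFn_toLp, hg] with x h1 h2
      rwa [h1]
    · have : T hg2.toLp = g := Lp.ext ((hT _).trans hg2.coeFn_toLp)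
      rwa [this]
end

section
/- Let (X, μ) be a σ-finite measure space, S a semi-doubly stochastic operator on L¹(X,μ), and F a finite-dimensional linear subspace of L¹(X,μ). Then there exists a sequence (I_n)_{n∈ℕ} of semi-doubly stochastic integral operators on L¹(X,μ) such that ‖I_n h − S h‖₁ → 0 as n → ∞ for every h ∈ F. -/
open MeasureTheory Filter Topology

/-- `K : X × X → [0,∞)` is a semi-doubly stochastic kernel: `∫ K(x,y) dμ(x) = 1` for a.e. `y`
and `∫ K(x,y) dμ(y) ≤ 1` for a.e. `x`. -/
def IsSemiDoublyStochasticKernel {X : Type*} [MeasurableSpace X] (μ : Measure X)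
    (K : X → X → ℝ) : Prop :=
  Measurable (Function.uncurry K) ∧ (∀ x y, 0 ≤ K x y) ∧
  (∀ᵐ y ∂μ, ∫⁻ x, ENNReal.ofReal (K x y) ∂μ = 1) ∧
  (∀ᵐ x ∂μ, ∫⁻ y, ENNReal.ofReal (K x y) ∂μ ≤ 1)

/-- `T` is a semi-doubly stochastic integral operator: `(Tf)(x) = ∫ K(x,y) f(y) dμ(y)` for
some semi-doubly stochastic kernel `K`. -/
def IsSemiDoublyStochasticIntegralOperator {X : Type*} [MeasurableSpace X] {μ : Measure X}
    (T : Lp ℝ 1 μ →L[ℝ] Lp ℝ 1 μ) : Prop :=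
  ∃ K : X → X → ℝ, IsSemiDoublyStochasticKernel μ K ∧
    ∀ f : Lp ℝ 1 μ, (T f : X → ℝ) =ᵐ[μ] fun x => ∫ y, K x y * (f : X → ℝ) y ∂μ

/-- A kernel with unit column integrals defines a contraction of `L¹`. -/
theorem sds_kernel_operator {X : Type*} [MeasurableSpace X] (μ : Measure X) [SigmaFinite μ]
    (K : X → X → ℝ) (hK : IsSemiDoublyStochasticKernel μ K) :
    ∃ A : Lp ℝ 1 μ →L[ℝ] Lp ℝ 1 μ, (∀ f, ‖A f‖ ≤ ‖f‖) ∧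
      ∀ f : Lp ℝ 1 μ, (A f : X → ℝ) =ᵐ[μ] fun x => ∫ y, K x y * (f : X → ℝ) y ∂μ := by
  obtain ⟨hKm, hK0, hKc, -⟩ := hK
  have hKs : ∀ y, AEStronglyMeasurable (fun x => K x y) μ := fun y =>
    (hKm.comp (measurable_id.prodMk measurable_const)).aestronglyMeasurable
  have hcol : ∀ᵐ y ∂μ, Integrable (fun x => K x y) μ ∧ ∫ x, K x y ∂μ = 1 := by
    filter_upwards [hKc] with y hy
    constructor
    · refine ⟨hKs y, ?_⟩
      rw [hasFiniteIntegral_iff_ofReal (ae_of_all _ fun x => hK0 x y), hy]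
      exact ENNReal.one_lt_top
    · rw [integral_eq_lintegral_of_nonneg_ae (ae_of_all _ fun x => hK0 x y) (hKs y), hy]
      rfl
  have hnorm : ∀ f : Lp ℝ 1 μ, (fun y => ∫ x, ‖K x y * (f : X → ℝ) y‖ ∂μ)
      =ᵐ[μ] fun y => ‖(f : X → ℝ) y‖ := by
    intro f
    filter_upwards [hcol] with y hy
    have : ∀ x, ‖K x y * (f : X → ℝ) y‖ = K x y * ‖(f : X → ℝ) y‖ := fun x => by
      rw [norm_mul, Real.norm_of_nonneg (hK0 x y)]
    simp_rw [this]
    rw [integral_mul_const, hy.2, one_mul]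
  have hint : ∀ f : Lp ℝ 1 μ, Integrable (fun z : X × X => K z.1 z.2 * (f : X → ℝ) z.2)
      (μ.prod μ) := by
    intro f
    have hm : AEStronglyMeasurable (fun z : X × X => K z.1 z.2 * (f : X → ℝ) z.2)
        (μ.prod μ) := by
      refine AEStronglyMeasurable.mul hKm.aestronglyMeasurable ?_
      exact ((Lp.stronglyMeasurable f).comp_measurable measurable_snd).aestronglyMeasurable
    rw [integrable_prod_iff' hm]
    constructor
    · filter_upwards [hcol] with y hy
      exact hy.1.mul_const _
    · exact (integrable_congr (hnorm f)).2 (L1.integrable_coeFn f).norm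
  have hI : ∀ f : Lp ℝ 1 μ, Integrable (fun x => ∫ y, K x y * (f : X → ℝ) y ∂μ) μ :=
    fun f => (hint f).integral_prod_left
  let L : Lp ℝ 1 μ →ₗ[ℝ] Lp ℝ 1 μ :=
    { toFun := fun f => (hI f).toL1 _
      map_add' := by
        intro f g
        rw [← Integrable.toL1_add]
        refine (Integrable.toL1_eq_toL1_iff _ _ _ _).2 ?_
        filter_upwards [(hint f).prod_right_ae, (hint g).prod_right_ae] with x hf hg
        simp only [Pi.add_apply]
        rw [← integral_add hf hg]
        refine integral_congr_ae ?_
        filter_upwards [Lp.coeFn_add f g] with y hy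
        rw [hy, Pi.add_apply, mul_add]
      map_smul' := by
        intro c f
        simp only [RingHom.id_apply]
        rw [← Integrable.toL1_smul]
        refine (Integrable.toL1_eq_toL1_iff _ _ _ _).2 ?_
        refine ae_of_all _ fun x => ?_
        simp only [smul_eq_mul]
        rw [← integral_const_mul]
        refine integral_congr_ae ?_
        filter_upwards [Lp.coeFn_smul c f] with y hy
        rw [hy, Pi.smul_apply, smul_eq_mul]
        ring }
  have hL : ∀ f, ‖L f‖ ≤ 1 * ‖f‖ := by
    intro f
    rw [one_mul, L1.norm_eq_integral_norm, L1.norm_eq_integral_norm]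
    calc ∫ x, ‖(L f : X → ℝ) x‖ ∂μ = ∫ x, ‖∫ y, K x y * (f : X → ℝ) y ∂μ‖ ∂μ := by
          refine integral_congr_ae ?_
          filter_upwards [(hI f).coeFn_toL1] with x hx
          rw [← hx]; rfl
      _ ≤ ∫ x, ∫ y, ‖K x y * (f : X → ℝ) y‖ ∂μ ∂μ :=
          integral_mono (hI f).norm (hint f).norm.integral_prod_left
            (fun x => norm_integral_le_integral_norm _)
      _ = ∫ y, ∫ x, ‖K x y * (f : X → ℝ) y‖ ∂μ ∂μ := integral_integral_swap (hint f).norm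
      _ = ∫ y, ‖(f : X → ℝ) y‖ ∂μ := integral_congr_ae (hnorm f)
  refine ⟨L.mkContinuous 1 hL, fun f => by simpa using hL f, fun f => (hI f).coeFn_toL1⟩

/-- Coercion of a finite sum in `L¹`. -/
theorem sds_coeFn_sum {X : Type*} [MeasurableSpace X] {μ : Measure X} {κ : Type*}
    (J : Finset κ) (u : κ → Lp ℝ 1 μ) :
    ((∑ i ∈ J, u i : Lp ℝ 1 μ) : X → ℝ) =ᵐ[μ] ∑ i ∈ J, (u i : X → ℝ) := by
  classical
  induction J using Finset.induction_on with
  | empty =>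
    simp only [Finset.sum_empty]
    exact Lp.coeFn_zero ℝ 1 μ
  | insert a J ha ih =>
    rw [Finset.sum_insert ha, Finset.sum_insert ha]
    filter_upwards [Lp.coeFn_add (u a) (∑ i ∈ J, u i), ih] with x h1 h2
    rw [h1, Pi.add_apply, Pi.add_apply, h2]

/-- `S χ_B ≤ 1`. -/
theorem sds_le_one {X : Type*} [MeasurableSpace X] (μ : Measure X) [SigmaFinite μ]
    (S : Lp ℝ 1 μ →L[ℝ] Lp ℝ 1 μ) (hS : IsSemiDoublyStochastic S) (B : Set X)
    (hB : MeasurableSet B) (hBfin : μ B ≠ ⊤) :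
    ∀ᵐ x ∂μ, (S (indicatorConstLp 1 hB hBfin (1 : ℝ)) : X → ℝ) x ≤ 1 := by
  have hi := L1.integrable_coeFn (S (indicatorConstLp 1 hB hBfin (1 : ℝ)))
  have := ae_nonneg_of_forall_setIntegral_nonneg_of_sigmaFinite (μ := μ)
    (f := fun x => 1 - (S (indicatorConstLp 1 hB hBfin (1 : ℝ)) : X → ℝ) x) ?_ ?_
  · filter_upwards [this] with x hx
    simpa using hx
  · intro s hs hs'
    exact (integrableOn_const hs'.ne).sub hi.integrableOn
  · intro s hs hs'
    have hc : Integrable (fun _ : X => (1 : ℝ)) (μ.restrict s) := integrableOn_const hs'.ne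
    rw [integral_sub hc hi.integrableOn]
    have := hS.2.2 s B hs hs' hB hBfin.lt_top
    simpa [Measure.real] using this

/-- Measurability of the averaged kernel. -/
theorem sds_measurable_kernel {X : Type*} [MeasurableSpace X]
    {ι : Type*} [Countable ι] [MeasurableSpace ι] [MeasurableSingletonClass ι]
    (p : X → ι) (hp : Measurable p) (s : ι → X → ℝ) (m : ι → ℝ) (hs : ∀ i, Measurable (s i)) :
    Measurable (Function.uncurry fun x y => s (p y) x / m (p y)) := by
  have h : Measurable (fun z : X × ι => s z.2 z.1 / m z.2) :=
    measurable_from_prod_countable_left fun i => (hs i).div_const (m i)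
  exact h.comp (measurable_fst.prodMk (hp.comp measurable_snd))

set_option maxHeartbeats 1000000 in
/-- The averaged operator attached to a countable partition. -/
theorem sds_partition_operator {X : Type*} [MeasurableSpace X] (μ : Measure X) [SigmaFinite μ]
    (S : Lp ℝ 1 μ →L[ℝ] Lp ℝ 1 μ) (hS : IsSemiDoublyStochastic S)
    {ι : Type*} [Countable ι] [MeasurableSpace ι] [MeasurableSingletonClass ι]
    (p : X → ι) (hp : Measurable p) (hm : ∀ i, MeasurableSet (p ⁻¹' {i}))
    (hfin : ∀ i, μ (p ⁻¹' {i}) ≠ ⊤) :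
    ∃ A : Lp ℝ 1 μ →L[ℝ] Lp ℝ 1 μ, IsSemiDoublyStochasticIntegralOperator A ∧
      (∀ f, ‖A f‖ ≤ ‖f‖) ∧ ∀ i, A (indicatorConstLp 1 (hm i) (hfin i) (1 : ℝ)) =
        S (indicatorConstLp 1 (hm i) (hfin i) (1 : ℝ)) := by
  classical
  let u : ι → Lp ℝ 1 μ := fun i => indicatorConstLp 1 (hm i) (hfin i) (1 : ℝ)
  let s : ι → X → ℝ := fun i x => max ((S (u i) : X → ℝ) x) 0
  let m : ι → ℝ := fun i => (μ (p ⁻¹' {i})).toReal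
  have hu0 : ∀ i, 0 ≤ᵐ[μ] (u i : X → ℝ) := by
    intro i
    filter_upwards [indicatorConstLp_coeFn (p := 1) (hs := hm i) (hμs := hfin i) (c := (1:ℝ))]
      with x hx
    simp only [u, Pi.zero_apply]
    rw [hx]
    exact Set.indicator_nonneg (fun _ _ => zero_le_one) x
  have hs : ∀ i, (S (u i) : X → ℝ) =ᵐ[μ] s i := by
    intro i
    filter_upwards [hS.1 _ (hu0 i)] with x hx
    exact (max_eq_left hx).symm
  have hs0 : ∀ i x, 0 ≤ s i x := fun i x => le_max_right _ _
  have hm0 : ∀ i, 0 ≤ m i := fun i => ENNReal.toReal_nonneg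
  have hsm : ∀ i, Measurable (s i) := fun i =>
    (Lp.stronglyMeasurable (S (u i))).measurable.max measurable_const
  have hsi : ∀ i, Integrable (s i) μ := fun i =>
    (integrable_congr (hs i)).1 (L1.integrable_coeFn _)
  have hsint : ∀ i, ∫⁻ x, ENNReal.ofReal (s i x) ∂μ = ENNReal.ofReal (m i) := by
    intro i
    rw [← ofReal_integral_eq_lintegral_ofReal (hsi i) (ae_of_all _ (hs0 i)),
      ← integral_congr_ae (hs i), hS.2.1]
    congr 1
    simp only [u, m]
    rw [integral_indicatorConstLp]
    simp [Measure.real]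
  -- finite sums are at most one
  have hsum : ∀ J : Finset ι, ∀ᵐ x ∂μ, ∑ i ∈ J, s i x ≤ 1 := by
    intro J
    have hBm : MeasurableSet (⋃ i ∈ J, p ⁻¹' {i}) := J.measurableSet_biUnion fun i _ => hm i
    have hBf : μ (⋃ i ∈ J, p ⁻¹' {i}) ≠ ⊤ := by
      refine (lt_of_le_of_lt (measure_biUnion_finset_le J _) ?_).ne
      exact ENNReal.sum_lt_top.2 fun i _ => (hfin i).lt_top
    have hadd : indicatorConstLp 1 hBm hBf (1 : ℝ) = ∑ i ∈ J, u i := by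
      apply Lp.ext
      have h2 : ∀ᵐ x ∂μ, ∀ i, (u i : X → ℝ) x = (p ⁻¹' {i}).indicator (fun _ => (1 : ℝ)) x :=
        ae_all_iff.2 fun i => indicatorConstLp_coeFn
      filter_upwards [indicatorConstLp_coeFn (p := 1) (hs := hBm) (hμs := hBf) (c := (1:ℝ)),
        sds_coeFn_sum J u, h2] with x h1 h3 h2
      rw [h1, h3, Finset.sum_apply]
      simp_rw [h2]
      simp [Set.indicator_apply]
    have hle := sds_le_one μ S hS _ hBm hBf
    rw [hadd, map_sum] at hle
    filter_upwards [hle, sds_coeFn_sum J (fun i => S (u i)), ae_all_iff.2 hs] with x h1 h2 h3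
    rw [h2, Finset.sum_apply] at h1
    simpa only [h3] using h1
  let K : X → X → ℝ := fun x y => s (p y) x / m (p y)
  have hK : IsSemiDoublyStochasticKernel μ K := by
    refine ⟨?_, fun x y => div_nonneg (hs0 _ _) (hm0 _), ?_, ?_⟩
    · exact sds_measurable_kernel p hp s m hsm
    · have hnull : ∀ᵐ y ∂μ, ∀ i, m i = 0 → p y ≠ i := by
        refine ae_all_iff.2 fun i => ?_
        by_cases hi : m i = 0
        · have : μ (p ⁻¹' {i}) = 0 := by
            simpa [m, ENNReal.toReal_eq_zero_iff, hfin i] using hi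
          filter_upwards [measure_eq_zero_iff_ae_notMem.1 this] with y hy _ h
          exact hy h
        · exact ae_of_all _ fun y h => absurd h hi
      filter_upwards [hnull] with y hy
      have hy0 : m (p y) ≠ 0 := fun h => hy _ h rfl
      have hpos : 0 < m (p y) := lt_of_le_of_ne (hm0 _) hy0.symm
      have : ∀ x, ENNReal.ofReal (K x y) = ENNReal.ofReal (s (p y) x) / ENNReal.ofReal (m (p y)) :=
        fun x => ENNReal.ofReal_div_of_pos hpos
      simp_rw [this, div_eq_mul_inv]
      rw [lintegral_mul_const _ (hsm _).ennreal_ofReal, hsint]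
      exact ENNReal.mul_inv_cancel (by simpa using hpos) ENNReal.ofReal_ne_top
    · filter_upwards [ae_all_iff.2 hsum] with x hx
      have h1 : ∫⁻ y, ENNReal.ofReal (K x y) ∂μ
          = ∑' i, ENNReal.ofReal (s i x / m i) * μ (p ⁻¹' {i}) := by
        have := lintegral_map (μ := μ) (f := fun i => ENNReal.ofReal (s i x / m i))
          (measurable_of_countable _) hp
        rw [← this, lintegral_countable']
        refine tsum_congr fun i => ?_
        rw [Measure.map_apply hp (measurableSet_singleton i)]
      rw [h1]
      refine ENNReal.summable.tsum_le_of_sum_le fun J => ?_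
      calc ∑ i ∈ J, ENNReal.ofReal (s i x / m i) * μ (p ⁻¹' {i})
          ≤ ∑ i ∈ J, ENNReal.ofReal (s i x) := by
            refine Finset.sum_le_sum fun i _ => ?_
            rw [← ENNReal.ofReal_toReal (hfin i),
              ← ENNReal.ofReal_mul (div_nonneg (hs0 _ _) (hm0 _))]
            refine ENNReal.ofReal_le_ofReal ?_
            change s i x / m i * m i ≤ s i x
            by_cases h : m i = 0
            · rw [h, mul_zero]; exact hs0 i x
            · rw [div_mul_cancel₀ _ h]
        _ = ENNReal.ofReal (∑ i ∈ J, s i x) :=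
            (ENNReal.ofReal_sum_of_nonneg fun i _ => hs0 i x).symm
        _ ≤ 1 := by
            rw [← ENNReal.ofReal_one]
            exact ENNReal.ofReal_le_ofReal (hx J)
  obtain ⟨A, hA1, hA2⟩ := sds_kernel_operator μ K hK
  refine ⟨A, ⟨K, hK, hA2⟩, hA1, fun i => ?_⟩
  by_cases hi : m i = 0
  · have h0 : u i = 0 := by
      rw [← norm_eq_zero]
      simp only [u]
      rw [norm_indicatorConstLp one_ne_zero ENNReal.one_ne_top]
      simpa [Measure.real] using hi
    change A (u i) = S (u i)
    rw [h0, map_zero, map_zero]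
  · apply Lp.ext
    filter_upwards [hA2 (u i), hs i] with x h1 h2
    change (A (u i) : X → ℝ) x = (S (u i) : X → ℝ) x
    rw [h1, h2]
    have : (fun y => K x y * (u i : X → ℝ) y) =ᵐ[μ]
        (p ⁻¹' {i}).indicator (fun _ => s i x / m i) := by
      filter_upwards [indicatorConstLp_coeFn (p := 1) (hs := hm i) (hμs := hfin i)
        (c := (1:ℝ))] with y hy
      simp only [u]
      rw [hy]
      by_cases hyi : p y = i
      · simp [hyi, K]
      · simp [hyi]
    rw [integral_congr_ae this, integral_indicator_const _ (hm i), smul_eq_mul]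
    exact mul_div_cancel₀ _ hi

/-- One step of the approximation. -/
theorem sds_approx_step {X : Type*} [MeasurableSpace X] (μ : Measure X) [SigmaFinite μ]
    (S : Lp ℝ 1 μ →L[ℝ] Lp ℝ 1 μ) (hS : IsSemiDoublyStochastic S)
    (t : Finset (Lp ℝ 1 μ)) (ε : ℝ) (hε : 0 < ε) :
    ∃ A : Lp ℝ 1 μ →L[ℝ] Lp ℝ 1 μ, IsSemiDoublyStochasticIntegralOperator A ∧
      ∀ h ∈ t, ‖A h - S h‖ ≤ (1 + ‖S‖) * ε := by
  classical
  let H : X → (t → ℝ) := fun x j => ((j : Lp ℝ 1 μ) : X → ℝ) x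
  have hH : Integrable H μ := Integrable.of_eval fun j => L1.integrable_coeFn (j : Lp ℝ 1 μ)
  obtain ⟨g, hg, hgL⟩ := (memLp_one_iff_integrable.2 hH).exists_simpleFunc_eLpNorm_sub_lt
    ENNReal.one_ne_top (ε := ENNReal.ofReal ε) (by simpa using hε)
  have hgi : Integrable g μ := memLp_one_iff_integrable.1 hgL
  let p : X → g.range × ℕ := fun x =>
    (⟨g x, g.mem_range_self x⟩, if g x = 0 then spanningSetsIndex μ x else 0)
  have hp : Measurable p := by
    refine Measurable.prodMk (g.measurable.subtype_mk) ?_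
    exact Measurable.ite (g.measurableSet_fiber 0) (measurableSet_spanningSetsIndex μ)
      measurable_const
  have hm : ∀ i, MeasurableSet (p ⁻¹' {i}) := fun i => hp (measurableSet_singleton i)
  have hgf : ∀ v, v ≠ 0 → μ (g ⁻¹' {v}) < ⊤ := fun v hv =>
    (SimpleFunc.integrable_iff.1 hgi) v hv
  have hfin : ∀ i, μ (p ⁻¹' {i}) ≠ ⊤ := by
    rintro ⟨⟨v, hv⟩, n⟩
    by_cases hv0 : v = 0
    · refine (lt_of_le_of_lt (measure_mono ?_) (measure_spanningSets_lt_top μ n)).ne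
      intro x hx
      simp only [Set.mem_preimage, Set.mem_singleton_iff, p, Prod.mk.injEq,
        Subtype.mk.injEq] at hx
      have h2 := hx.2
      rw [if_pos (hx.1.trans hv0)] at h2
      rw [← h2]
      exact mem_spanningSetsIndex μ x
    · refine (lt_of_le_of_lt (measure_mono ?_) (hgf v hv0)).ne
      intro x hx
      simp only [Set.mem_preimage, Set.mem_singleton_iff, p, Prod.mk.injEq,
        Subtype.mk.injEq] at hx
      exact hx.1
  obtain ⟨A, hA, hA1, hA2⟩ := sds_partition_operator μ S hS p hp hm hfin
  refine ⟨A, hA, fun h hh => ?_⟩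
  let j : t := ⟨h, hh⟩
  have hgj : Integrable (fun x => g x j) μ := hgi.eval j
  let G : Lp ℝ 1 μ := hgj.toL1 _
  have hGsum : G = ∑ v : g.range, (v : t → ℝ) j • indicatorConstLp 1 (hm (v, 0)) (hfin (v, 0))
      (1 : ℝ) := by
    apply Lp.ext
    have h2 : ∀ᵐ x ∂μ, ∀ v : g.range, (((v : t → ℝ) j • indicatorConstLp 1 (hm (v, 0))
        (hfin (v, 0)) (1 : ℝ) : Lp ℝ 1 μ) : X → ℝ) x =
        (v : t → ℝ) j * (p ⁻¹' {(v, 0)}).indicator (fun _ => (1 : ℝ)) x := by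
      refine ae_all_iff.2 fun v => ?_
      filter_upwards [Lp.coeFn_smul ((v : t → ℝ) j) (indicatorConstLp 1 (hm (v, 0))
        (hfin (v, 0)) (1 : ℝ)), indicatorConstLp_coeFn (p := 1) (hs := hm (v, 0))
        (hμs := hfin (v, 0)) (c := (1:ℝ))] with x h1 h2
      rw [h1, Pi.smul_apply, h2, smul_eq_mul]
    filter_upwards [hgj.coeFn_toL1, sds_coeFn_sum Finset.univ (fun v : g.range =>
      (v : t → ℝ) j • indicatorConstLp 1 (hm (v, 0)) (hfin (v, 0)) (1 : ℝ)), h2] with x h1 h3 h2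
    rw [h3, Finset.sum_apply]
    simp_rw [h2]
    change (G : X → ℝ) x = _
    rw [h1, Finset.sum_eq_single ⟨g x, g.mem_range_self x⟩]
    · by_cases h0 : g x = 0
      · simp [h0]
      · simp [Set.indicator_apply, p, h0]
    · intro v _ hv
      rw [Set.indicator_of_notMem, mul_zero]
      intro hx
      simp only [Set.mem_preimage, Set.mem_singleton_iff, p, Prod.mk.injEq] at hx
      exact hv hx.1.symm
    · simp
  have hAG : A G = S G := by
    rw [hGsum, map_sum, map_sum]
    refine Finset.sum_congr rfl fun v _ => ?_
    rw [map_smul, map_smul, hA2]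
  have hhG : ‖h - G‖ ≤ ε := by
    have e1 : eLpNorm ((h - G : Lp ℝ 1 μ) : X → ℝ) 1 μ ≤ ENNReal.ofReal ε := by
      refine le_trans (eLpNorm_mono_ae ?_) hg.le
      filter_upwards [Lp.coeFn_sub h G, hgj.coeFn_toL1] with x h1 h2
      rw [h1, Pi.sub_apply]
      change ‖(h : X → ℝ) x - (G : X → ℝ) x‖ ≤ _
      rw [h2]
      exact norm_le_pi_norm ((H - ⇑g) x) j
    rw [Lp.norm_def]
    exact ENNReal.toReal_le_of_le_ofReal hε.le e1
  have : A h - S h = A (h - G) - S (h - G) := by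
    rw [map_sub, map_sub, hAG]; abel
  rw [this]
  calc ‖A (h - G) - S (h - G)‖ ≤ ‖A (h - G)‖ + ‖S (h - G)‖ := norm_sub_le _ _
    _ ≤ ‖h - G‖ + ‖S‖ * ‖h - G‖ := add_le_add (hA1 _) (S.le_opNorm _)
    _ = (1 + ‖S‖) * ‖h - G‖ := by ring
    _ ≤ (1 + ‖S‖) * ε := by gcongr

/-- **Approximation by integral operators.**  On a σ-finite measure space, every semi-doubly
stochastic operator `S` can be approximated, in `L¹` norm on any finite-dimensional subspace
`F` of `L¹(X,μ)`, by a sequence of semi-doubly stochastic integral operators. -/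
theorem semiDoublyStochastic_approx_by_integral_operators
    {X : Type*} [MeasurableSpace X] (μ : Measure X) [SigmaFinite μ]
    (S : Lp ℝ 1 μ →L[ℝ] Lp ℝ 1 μ) (hS : IsSemiDoublyStochastic S)
    (F : Submodule ℝ (Lp ℝ 1 μ)) (hF : FiniteDimensional ℝ F) :
    ∃ I : ℕ → (Lp ℝ 1 μ →L[ℝ] Lp ℝ 1 μ),
      (∀ n, IsSemiDoublyStochasticIntegralOperator (I n)) ∧
      ∀ h : Lp ℝ 1 μ, h ∈ F →
        Tendsto (fun n => ‖I n h - S h‖) atTop (𝓝 0) := by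
  obtain ⟨t, ht⟩ := Submodule.fg_iff_finiteDimensional F |>.2 hF
  choose I hI hIt using fun n : ℕ =>
    sds_approx_step μ S hS t (1 / ((n : ℝ) + 1)) (by positivity)
  refine ⟨I, hI, fun h hh => ?_⟩
  have key : Tendsto (fun n => I n h - S h) atTop (𝓝 0) := by
    rw [← ht] at hh
    induction hh using Submodule.span_induction with
    | mem x hx =>
      rw [tendsto_zero_iff_norm_tendsto_zero]
      refine squeeze_zero (fun n => norm_nonneg _) (fun n => hIt n x hx) ?_
      simpa using tendsto_one_div_add_atTop_nhds_zero_nat.const_mul (1 + ‖S‖)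
    | zero => simp
    | add x y _ _ hx hy =>
      have := hx.add hy
      rw [add_zero] at this
      refine this.congr fun n => ?_
      rw [map_add, map_add]; abel
    | smul c x _ hx =>
      have := hx.const_smul c
      rw [smul_zero] at this
      refine this.congr fun n => ?_
      rw [map_smul, map_smul, smul_sub]
  simpa using key.norm
end

section
/- Let (X, μ) be a σ-finite measure space and f, g ∈ L¹(X,μ) nonnegative. Then g is majorized by f (i.e. ∫_u^∞ μ{g > t} dt ≤ ∫_u^∞ μ{f > t} dt for every u ≥ 0 and ∫_X g dμ = ∫_X f dμ) if and only if there exists a sequence (S_k)_{k∈ℕ} of semi-doubly stochastic operators on L¹(X,μ) such that ‖S_k f − g‖₁ → 0 as k → ∞. -/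
open MeasureTheory Filter Topology

section Helpers

variable {X : Type*} [MeasurableSpace X] {μ : Measure X}

lemma pp_integrable {φ : X → ℝ} (hφ : Integrable φ μ) {u : ℝ} (hu : 0 ≤ u) :
    Integrable (fun x => max (φ x - u) 0) μ := by
  refine Integrable.mono hφ ?_ ?_
  · have h1 : AEMeasurable φ μ := hφ.aemeasurable
    exact ((h1.sub_const u).max aemeasurable_const).aestronglyMeasurable
  · filter_upwards with x
    rw [Real.norm_eq_abs, Real.norm_eq_abs, abs_of_nonneg (le_max_right _ _)]
    refine max_le ?_ (abs_nonneg _)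
    linarith [le_abs_self (φ x)]

lemma layer {φ : X → ℝ} (hφ : Integrable φ μ) {u : ℝ} (hu : 0 ≤ u) :
    ∫⁻ t in Set.Ioi u, μ {x | φ x > t} ∂(volume : Measure ℝ)
      = ENNReal.ofReal (∫ x, max (φ x - u) 0 ∂μ) := by
  have hi := pp_integrable hφ hu
  rw [ofReal_integral_eq_lintegral_ofReal hi (Eventually.of_forall fun x => le_max_right _ _),
    lintegral_eq_lintegral_meas_lt μ (f := fun x => max (φ x - u) 0) (Eventually.of_forall fun x => le_max_right _ _)
      hi.aemeasurable]
  rw [← lintegral_indicator measurableSet_Ioi, ← lintegral_indicator measurableSet_Ioi,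
    ← lintegral_add_right_eq_self _ u]
  refine lintegral_congr fun t => ?_
  by_cases ht : 0 < t
  · rw [Set.indicator_of_mem (by simpa using ht), Set.indicator_of_mem (by simpa using ht)]
    congr 1
    ext x
    simp only [Set.mem_ofPred_eq, lt_max_iff]
    constructor
    · intro h; left; linarith
    · rintro (h | h) <;> linarith
  · rw [Set.indicator_of_notMem (by simpa using ht), Set.indicator_of_notMem (by simpa using ht)]

lemma L1_integral_le_norm (φ : Lp ℝ 1 μ) : ∫ x, |φ x| ∂μ = ‖φ‖ := by
  rw [L1.norm_eq_integral_norm]; rfl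

lemma pp_lip (φ ψ : Lp ℝ 1 μ) {u : ℝ} (hu : 0 ≤ u) :
    ∫ x, max (φ x - u) 0 ∂μ ≤ ∫ x, max (ψ x - u) 0 ∂μ + ‖φ - ψ‖ := by
  rw [← L1_integral_le_norm, ← integral_add (pp_integrable (L1.integrable_coeFn ψ) hu)
    (L1.integrable_coeFn (φ - ψ)).abs]
  refine integral_mono_ae (pp_integrable (L1.integrable_coeFn φ) hu)
    ((pp_integrable (L1.integrable_coeFn ψ) hu).add (L1.integrable_coeFn (φ - ψ)).abs) ?_
  filter_upwards [Lp.coeFn_sub φ ψ] with x hx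
  rw [hx]
  simp only [Pi.sub_apply]
  refine max_le ?_ (add_nonneg (le_max_right _ _) (abs_nonneg _))
  linarith [le_abs_self (φ x - ψ x), le_max_left (ψ x - u) 0]

lemma int_lip (φ ψ : Lp ℝ 1 μ) : |∫ x, φ x ∂μ - ∫ x, ψ x ∂μ| ≤ ‖φ - ψ‖ := by
  rw [← integral_sub (L1.integrable_coeFn φ) (L1.integrable_coeFn ψ), ← L1_integral_le_norm]
  refine (abs_integral_le_integral_abs).trans (le_of_eq (integral_congr_ae ?_))
  filter_upwards [Lp.coeFn_sub φ ψ] with x hx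
  rw [hx]; rfl

lemma setint_lip (φ ψ : Lp ℝ 1 μ) (E : Set X) :
    ∫ x in E, φ x ∂μ ≤ ∫ x in E, ψ x ∂μ + ‖φ - ψ‖ := by
  have h1 : ∫ x in E, |(φ - ψ : Lp ℝ 1 μ) x| ∂μ ≤ ‖φ - ψ‖ := by
    rw [← L1_integral_le_norm]
    exact setIntegral_le_integral (L1.integrable_coeFn (φ - ψ)).abs
      (Eventually.of_forall fun x => abs_nonneg _)
  refine le_trans ?_ (add_le_add_right h1 _)
  rw [← integral_add (L1.integrable_coeFn ψ).integrableOn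
    (L1.integrable_coeFn (φ - ψ)).abs.integrableOn]
  refine integral_mono_ae (L1.integrable_coeFn φ).integrableOn
    ((L1.integrable_coeFn ψ).integrableOn.add
      (L1.integrable_coeFn (φ - ψ)).abs.integrableOn) (ae_restrict_of_ae ?_)
  filter_upwards [Lp.coeFn_sub φ ψ] with x hx
  rw [hx]
  simp only [Pi.sub_apply]
  linarith [le_abs_self (φ x - ψ x)]

lemma sds_mono {T : Lp ℝ 1 μ →L[ℝ] Lp ℝ 1 μ} (hT : IsSemiDoublyStochastic T)
    {φ ψ : Lp ℝ 1 μ} (h : φ ≤ᵐ[μ] ψ) : (T φ : X → ℝ) ≤ᵐ[μ] T ψ := by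
  have h1 := hT.1 (ψ - φ) (by
    filter_upwards [h, Lp.coeFn_sub ψ φ] with x hx hx2
    rw [hx2]; simpa using hx)
  rw [map_sub] at h1
  filter_upwards [h1, Lp.coeFn_sub (T ψ) (T φ)] with x hx hx2
  rw [hx2] at hx; simpa using hx

lemma sds_bound [SigmaFinite μ] {T : Lp ℝ 1 μ →L[ℝ] Lp ℝ 1 μ} (hT : IsSemiDoublyStochastic T)
    {φ : Lp ℝ 1 μ} {u : ℝ} (hu : 0 ≤ u) (h : ∀ᵐ x ∂μ, φ x ≤ u) :
    ∀ᵐ x ∂μ, (T φ : X → ℝ) x ≤ u := by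
  have key : ∀ E : Set X, MeasurableSet E → μ E < ⊤ →
      ∫ x in E, (T φ : X → ℝ) x ∂μ ≤ u * (μ E).toReal := by
    intro E hE hEf
    let B := spanningSets μ
    have hB : ∀ n, MeasurableSet (B n) := measurableSet_spanningSets μ
    have hBf : ∀ n, μ (B n) < ⊤ := measure_spanningSets_lt_top μ
    have hint : ∀ n, Integrable ((B n).indicator φ) μ := fun n =>
      (L1.integrable_coeFn φ).indicator (hB n)
    let ψ : ℕ → Lp ℝ 1 μ := fun n => (hint n).toL1 _
    have hψ : Tendsto (fun n => ‖φ - ψ n‖) atTop (𝓝 0) := by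
      have e : ∀ n, ‖φ - ψ n‖ = ∫ x, |φ x - (B n).indicator φ x| ∂μ := by
        intro n
        rw [← L1_integral_le_norm]
        refine integral_congr_ae ?_
        filter_upwards [Lp.coeFn_sub φ (ψ n), (hint n).coeFn_toL1] with x h1 h2
        rw [h1, Pi.sub_apply, h2]
      simp_rw [e]
      have := tendsto_integral_of_dominated_convergence (μ := μ) (f := fun _ => (0 : ℝ))
        (F := fun n x => |φ x - (B n).indicator φ x|) (fun x => |φ x|)
        (fun n => ((L1.integrable_coeFn φ).sub (hint n)).abs.aestronglyMeasurable)
        (L1.integrable_coeFn φ).abs ?_ ?_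
      · simpa using this
      · intro n
        filter_upwards with x
        by_cases hx : x ∈ B n <;> simp [hx]
      · filter_upwards with x
        have hx : x ∈ ⋃ n, B n := by rw [iUnion_spanningSets]; trivial
        obtain ⟨N, hN⟩ := Set.mem_iUnion.1 hx
        refine tendsto_const_nhds.congr' ?_
        filter_upwards [eventually_ge_atTop N] with n hn
        have : x ∈ B n := monotone_spanningSets μ hn hN
        simp [this]
    have hle : ∀ n, ∫ x in E, (T φ : X → ℝ) x ∂μ ≤ u * (μ E).toReal + ‖T‖ * ‖φ - ψ n‖ := by
      intro n
      have h1 := setint_lip (T φ) (T (ψ n)) E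
      have h2 : ‖T φ - T (ψ n)‖ ≤ ‖T‖ * ‖φ - ψ n‖ := by
        rw [← map_sub]; exact T.le_opNorm _
      have h3 := sds_mono hT (φ := ψ n) (ψ := u • indicatorConstLp 1 (hB n) (hBf n).ne (1:ℝ)) (by
        filter_upwards [(hint n).coeFn_toL1, Lp.coeFn_smul u
          (indicatorConstLp (μ := μ) 1 (hB n) (hBf n).ne (1:ℝ)),
          indicatorConstLp_coeFn (p := 1) (hs := hB n) (hμs := (hBf n).ne) (c := (1:ℝ)), h]
          with x a1 a2 a3 a4
        rw [a1, a2, Pi.smul_apply, a3]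
        by_cases hx : x ∈ B n <;> simp [hx, a4])
      rw [map_smul] at h3
      have h4 : ∫ x in E, (T (ψ n) : X → ℝ) x ∂μ ≤ u * (μ E).toReal := by
        calc _ ≤ ∫ x in E, u * (T (indicatorConstLp 1 (hB n) (hBf n).ne (1:ℝ)) : X → ℝ) x ∂μ := by
              refine integral_mono_ae (L1.integrable_coeFn _).integrableOn
                ((L1.integrable_coeFn _).restrict.const_mul u) (ae_restrict_of_ae ?_)
              filter_upwards [h3, Lp.coeFn_smul u
                (T (indicatorConstLp (μ := μ) 1 (hB n) (hBf n).ne (1:ℝ)))] with x b1 b2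
              rw [b2] at b1; simpa using b1
          _ = u * ∫ x in E, (T (indicatorConstLp 1 (hB n) (hBf n).ne (1:ℝ)) : X → ℝ) x ∂μ :=
              integral_const_mul _ _
          _ ≤ _ := mul_le_mul_of_nonneg_left (hT.2.2 E (B n) hE hEf (hB n) (hBf n)) hu
      linarith
    have : Tendsto (fun n => u * (μ E).toReal + ‖T‖ * ‖φ - ψ n‖) atTop
        (𝓝 (u * (μ E).toReal + ‖T‖ * 0)) := (hψ.const_mul _).const_add _
    have := ge_of_tendsto' this hle
    simpa using this
  have := ae_nonneg_of_forall_setIntegral_nonneg_of_sigmaFinite (μ := μ)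
    (f := fun x => u - (T φ : X → ℝ) x) ?_ ?_
  · filter_upwards [this] with x hx
    simpa using hx
  · intro s hs hsf
    exact (integrableOn_const hsf.ne).sub (L1.integrable_coeFn _).integrableOn
  · intro s hs hsf
    have hc : Integrable (fun _ : X => u) (μ.restrict s) := integrableOn_const hsf.ne
    rw [integral_sub hc (L1.integrable_coeFn _).restrict]
    have := key s hs hsf
    simp only [integral_const, smul_eq_mul, sub_nonneg]
    rw [measureReal_restrict_apply_univ, measureReal_def]
    linarith

lemma sds_pp [SigmaFinite μ] {T : Lp ℝ 1 μ →L[ℝ] Lp ℝ 1 μ} (hT : IsSemiDoublyStochastic T)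
    {φ : Lp ℝ 1 μ} {u : ℝ} (hu : 0 ≤ u) :
    ∫ x, max ((T φ : X → ℝ) x - u) 0 ∂μ ≤ ∫ x, max (φ x - u) 0 ∂μ := by
  have hi := pp_integrable (L1.integrable_coeFn φ) hu
  let φ1 : Lp ℝ 1 μ := hi.toL1 _
  have e1 : φ1 =ᵐ[μ] fun x => max (φ x - u) 0 := hi.coeFn_toL1
  let φ2 := φ - φ1
  have hb := sds_bound hT (φ := φ2) hu (by
    filter_upwards [e1, Lp.coeFn_sub φ φ1] with x h1 h2
    rw [h2, Pi.sub_apply, h1]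
    linarith [le_max_left (φ x - u) 0])
  have hp := hT.1 φ1 (by
    filter_upwards [e1] with x h1
    rw [h1]; exact le_max_right _ _)
  rw [← integral_congr_ae e1, ← hT.2.1 φ1]
  refine integral_mono_ae (pp_integrable (L1.integrable_coeFn _) hu) (L1.integrable_coeFn _) ?_
  have e2 : T φ = T φ1 + T φ2 := by rw [← map_add]; simp [φ2]
  rw [e2]
  filter_upwards [Lp.coeFn_add (T φ1) (T φ2), hb, hp] with x h1 h2 h3
  rw [h1]
  simp only [Pi.add_apply, Pi.zero_apply] at *
  exact max_le (by linarith) h3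

end Helpers

section Helpers2

variable {X : Type*} [MeasurableSpace X] {μ : Measure X}

/-- The top weight of `f` at level `t`, with fraction `θ` on the level set. -/
noncomputable def topW (f : X → ℝ) (t θ : ℝ) (x : X) : ℝ :=
  if t < f x then 1 else if f x = t then θ else 0

/-- Top weights of a function. -/
def TopWt (f w : X → ℝ) : Prop :=
  w = 0 ∨ ∃ t θ : ℝ, 0 ≤ t ∧ 0 ≤ θ ∧ θ ≤ 1 ∧ w = topW f t θ

lemma TopWt.nonneg {f w : X → ℝ} (h : TopWt f w) (x : X) : 0 ≤ w x := by
  rcases h with rfl | ⟨t, θ, ht, h0, h1, rfl⟩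
  · simp
  · unfold topW; split_ifs <;> linarith

lemma TopWt.le_one {f w : X → ℝ} (h : TopWt f w) (x : X) : w x ≤ 1 := by
  rcases h with rfl | ⟨t, θ, ht, h0, h1, rfl⟩
  · simp
  · unfold topW; split_ifs <;> linarith

lemma TopWt.measurable {f w : X → ℝ} (h : TopWt f w) (hf : Measurable f) : Measurable w := by
  rcases h with rfl | ⟨t, θ, ht, h0, h1, rfl⟩
  · exact measurable_const
  · unfold topW
    exact Measurable.ite (measurableSet_lt measurable_const hf) measurable_const
      (Measurable.ite (measurableSet_eq_fun hf measurable_const) measurable_const measurable_const)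

lemma TopWt.total {f w w' : X → ℝ} (h : TopWt f w) (h' : TopWt f w') :
    (∀ x, w x ≤ w' x) ∨ (∀ x, w' x ≤ w x) := by
  rcases h with rfl | ⟨t, θ, ht, h0, h1, rfl⟩
  · left; intro x; exact h'.nonneg x
  rcases h' with rfl | ⟨t', θ', ht', h0', h1', rfl⟩
  · right; intro x; exact TopWt.nonneg (Or.inr ⟨t, θ, ht, h0, h1, rfl⟩) x
  unfold topW
  rcases lt_trichotomy t t' with h | h | h
  · right; intro x
    split_ifs <;> linarith
  · subst h
    rcases le_total θ θ' with h | h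
    · left; intro x; split_ifs <;> linarith
    · right; intro x; split_ifs <;> linarith
  · left; intro x
    split_ifs <;> linarith

lemma TopWt.integrable {ν : Measure X} [IsFiniteMeasure ν] {f w : X → ℝ} (h : TopWt f w)
    (hf : Measurable f) : Integrable w ν := by
  refine Integrable.mono' (integrable_const (1:ℝ)) (h.measurable hf).aestronglyMeasurable ?_
  filter_upwards with x
  rw [Real.norm_eq_abs, abs_of_nonneg (h.nonneg x)]
  exact h.le_one x

lemma TopWt.ae_le {ν : Measure X} [IsFiniteMeasure ν] {f w w' : X → ℝ} (hf : Measurable f)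
    (h : TopWt f w) (h' : TopWt f w') (hi : ∫ x, w x ∂ν ≤ ∫ x, w' x ∂ν) : w ≤ᵐ[ν] w' := by
  rcases h.total h' with h1 | h1
  · exact Eventually.of_forall h1
  · have i1 := h.integrable (ν := ν) hf
    have i2 := h'.integrable (ν := ν) hf
    have : ∫ x, (w x - w' x) ∂ν = 0 := by
      apply le_antisymm
      · rw [integral_sub i1 i2]; linarith
      · exact integral_nonneg fun x => sub_nonneg.2 (h1 x)
    rw [integral_eq_zero_iff_of_nonneg (fun x => sub_nonneg.2 (h1 x)) (i1.sub i2)] at this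
    filter_upwards [this] with x hx
    simp only [Pi.zero_apply] at hx
    linarith

lemma integral_topW {ν : Measure X} [IsFiniteMeasure ν] {f : X → ℝ} (hf : Measurable f)
    (t θ : ℝ) : ∫ x, topW f t θ x ∂ν = ν.real {x | t < f x} + θ * ν.real {x | f x = t} := by
  have m1 : MeasurableSet {x | t < f x} := measurableSet_lt measurable_const hf
  have m2 : MeasurableSet {x | f x = t} := measurableSet_eq_fun hf measurable_const
  have : topW f t θ = fun x => Set.indicator {x | t < f x} (fun _ => (1:ℝ)) x
      + Set.indicator {x | f x = t} (fun _ => θ) x := by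
    ext x
    unfold topW
    by_cases h1 : t < f x
    · have h2 : ¬ f x = t := h1.ne'
      simp [h1, h2]
    · by_cases h2 : f x = t <;> simp [h1, h2]
  rw [this, integral_add ((integrable_const _).indicator m1) ((integrable_const _).indicator m2),
    integral_indicator m1, integral_indicator m2]
  simp [mul_comm]

lemma exists_top {ν : Measure X} [IsFiniteMeasure ν] {f : X → ℝ} (hf : Measurable f)
    (hfi : Integrable f ν) (h0 : 0 ≤ᵐ[ν] f) {M : ℝ} (hM : 0 ≤ M) (hM1 : M ≤ ν.real Set.univ) :
    ∃ w, TopWt f w ∧ ∫ x, w x ∂ν = M := by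
  rcases hM.eq_or_lt with rfl | hM
  · exact ⟨0, Or.inl rfl, by simp⟩
  let S : Set ℝ := {t | 0 ≤ t ∧ ν {x | t < f x} ≤ ENNReal.ofReal M}
  have hSb : BddBelow S := ⟨0, fun t ht => ht.1⟩
  have hI : 0 ≤ ∫ x, f x ∂ν := integral_nonneg_of_ae h0
  have hS : S.Nonempty := by
    refine ⟨(∫ x, f x ∂ν + 1) / M, by positivity, ?_⟩
    set t := (∫ x, f x ∂ν + 1) / M with ht
    have htp : 0 < t := by positivity
    have h1 := mul_meas_ge_le_integral_of_nonneg h0 hfi t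
    have h2 : ν {x | t < f x} ≤ ν {x | t ≤ f x} := measure_mono fun x hx => by
      simp only [Set.mem_ofPred_eq] at hx ⊢
      exact hx.le
    have h3 : ν.real {x | t ≤ f x} ≤ M := by
      have h4 : t * M = ∫ x, f x ∂ν + 1 := by rw [ht]; field_simp
      by_contra hcon
      push Not at hcon
      have := mul_lt_mul_of_pos_left hcon htp
      linarith
    refine h2.trans ?_
    rw [← ENNReal.ofReal_toReal (measure_ne_top ν {x | t ≤ f x})]
    exact ENNReal.ofReal_le_ofReal h3
  let t := sInf S
  have ht0 : 0 ≤ t := le_csInf hS fun s hs => hs.1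
  have hd : ν {x | t < f x} ≤ ENNReal.ofReal M := by
    have e : {x | t < f x} = ⋃ n : ℕ, {x | t + 1 / ((n : ℝ) + 1) < f x} := by
      ext x
      simp only [Set.mem_ofPred_eq, Set.mem_iUnion]
      constructor
      · intro h
        obtain ⟨n, hn⟩ := exists_nat_one_div_lt (sub_pos.2 h)
        exact ⟨n, by linarith⟩
      · rintro ⟨n, hn⟩
        have : (0:ℝ) < 1 / ((n : ℝ) + 1) := by positivity
        linarith
    have hmono : Monotone fun n : ℕ => {x | t + 1 / ((n : ℝ) + 1) < f x} := by
      intro a b hab x hx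
      simp only [Set.mem_ofPred_eq] at hx ⊢
      have : 1 / ((b : ℝ) + 1) ≤ 1 / ((a : ℝ) + 1) := by gcongr
      linarith
    rw [e, hmono.measure_iUnion]
    refine iSup_le fun n => ?_
    have : (0:ℝ) < 1 / ((n : ℝ) + 1) := by positivity
    obtain ⟨s, hs, hst⟩ := exists_lt_of_csInf_lt hS (show sInf S < t + 1 / ((n : ℝ) + 1) by
      change t < _; linarith)
    refine le_trans (measure_mono ?_) hs.2
    intro x hx
    exact lt_trans hst hx
  have he : ENNReal.ofReal M ≤ ν {x | t ≤ f x} := by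
    rcases ht0.eq_or_lt with h | h
    · have : ν {x | t ≤ f x} = ν Set.univ := by
        refine measure_congr (eventuallyEq_set.2 ?_)
        filter_upwards [h0] with x hx
        rw [← h]
        simpa using hx
      rw [this]
      exact ENNReal.ofReal_le_of_le_toReal hM1
    · have e : {x | t ≤ f x} = ⋂ n : ℕ, {x | t - t * (1 / ((n : ℝ) + 1)) < f x} := by
        ext x
        simp only [Set.mem_ofPred_eq, Set.mem_iInter]
        constructor
        · intro hx n
          have : (0:ℝ) < t * (1 / ((n : ℝ) + 1)) := by positivity
          linarith
        · intro hx
          have : Tendsto (fun n : ℕ => t - t * (1 / ((n : ℝ) + 1))) atTop (𝓝 (t - t * 0)) :=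
            (tendsto_one_div_add_atTop_nhds_zero_nat.const_mul t).const_sub t
          have := le_of_tendsto' this fun n => (hx n).le
          simpa using this
      have hanti : Antitone fun n : ℕ => {x | t - t * (1 / ((n : ℝ) + 1)) < f x} := by
        intro a b hab x hx
        simp only [Set.mem_ofPred_eq] at hx ⊢
        have : t * (1 / ((b : ℝ) + 1)) ≤ t * (1 / ((a : ℝ) + 1)) := by gcongr
        linarith
      rw [e, hanti.measure_iInter
        (fun n => (measurableSet_lt measurable_const hf).nullMeasurableSet)
        ⟨0, measure_ne_top _ _⟩]
      refine le_iInf fun n => ?_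
      have h5 : (0:ℝ) < t * (1 / ((n : ℝ) + 1)) := by positivity
      have h6 : t * (1 / ((n : ℝ) + 1)) ≤ t := by
        refine mul_le_of_le_one_right h.le ?_
        rw [div_le_one (by positivity)]
        have : (0:ℝ) ≤ n := Nat.cast_nonneg n
        linarith
      have h7 : t - t * (1 / ((n : ℝ) + 1)) ∉ S := notMem_of_lt_csInf (by
        change _ < t; linarith) hSb
      by_contra hcon
      push Not at hcon
      exact h7 ⟨by linarith, hcon.le⟩
  have hd' : ν.real {x | t < f x} ≤ M := ENNReal.toReal_le_of_le_ofReal hM.le hd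
  have he' : M ≤ ν.real {x | t ≤ f x} :=
    (ENNReal.ofReal_le_iff_le_toReal (measure_ne_top _ _)).1 he
  have hsplit : ν.real {x | t ≤ f x} = ν.real {x | t < f x} + ν.real {x | f x = t} := by
    rw [← measureReal_union (h₁ := measure_ne_top _ _) (h₂ := measure_ne_top _ _) _
      (measurableSet_eq_fun hf measurable_const)]
    · congr 1
      ext x
      simp only [Set.mem_ofPred_eq, Set.mem_union]
      rw [le_iff_lt_or_eq, eq_comm]
    · rw [Set.disjoint_left]
      intro x hx hx2
      simp only [Set.mem_ofPred_eq] at hx hx2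
      linarith
  have hen : 0 ≤ ν.real {x | f x = t} := measureReal_nonneg
  refine ⟨topW f t ((M - ν.real {x | t < f x}) / ν.real {x | f x = t}),
    Or.inr ⟨t, _, ht0, div_nonneg (by linarith) hen, ?_, rfl⟩, ?_⟩
  · exact div_le_one_of_le₀ (by linarith) hen
  · rw [integral_topW hf]
    rcases hen.eq_or_lt with h | h
    · rw [← h]
      rw [← h] at hsplit
      simp; linarith
    · field_simp; ring

/-- Lorenz inequality. -/
lemma lorenz {ν : Measure X} [IsFiniteMeasure ν] {f w : X → ℝ} (hf : Measurable f)
    (hfi : Integrable f ν) (hw : TopWt f w) {g q : X → ℝ}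
    (hg : Integrable g μ) (hq : Integrable q μ) (hqm : Measurable q) (hq0 : ∀ x, 0 ≤ q x)
    (hq1 : ∀ x, q x ≤ 1) (hqw : ∫ x, q x ∂μ = ∫ x, w x ∂ν) {ε : ℝ} (hε : 0 ≤ ε)
    (H : ∀ u, 0 ≤ u → ∫ x, max (g x - u) 0 ∂μ ≤ ∫ x, max (f x - u) 0 ∂ν + ε) :
    ∫ x, q x * g x ∂μ ≤ ∫ x, w x * f x ∂ν + ε := by
  have hqg : Integrable (fun x => q x * g x) μ := by
    refine hg.bdd_mul (c := 1) hqm.aestronglyMeasurable (Eventually.of_forall fun x => ?_)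
    rw [Real.norm_eq_abs, abs_of_nonneg (hq0 x)]; exact hq1 x
  have hwf : Integrable (fun x => w x * f x) ν := by
    refine hfi.bdd_mul (c := 1) (hw.measurable hf).aestronglyMeasurable
      (Eventually.of_forall fun x => ?_)
    rw [Real.norm_eq_abs, abs_of_nonneg (hw.nonneg x)]; exact hw.le_one x
  have hwi := hw.integrable (ν := ν) hf
  rcases hw with rfl | ⟨t, θ, ht, h0, h1, rfl⟩
  · simp only [Pi.zero_apply, integral_zero] at hqw
    rw [integral_eq_zero_iff_of_nonneg hq0 hq] at hqw
    have : ∫ x, q x * g x ∂μ = 0 := by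
      refine integral_eq_zero_of_ae ?_
      filter_upwards [hqw] with x hx
      simp [hx]
    rw [this]; simpa using hε
  · have e1 : ∫ x, topW f t θ x * f x ∂ν = ∫ x, max (f x - t) 0 ∂ν + t * ∫ x, topW f t θ x ∂ν := by
      rw [← integral_const_mul, ← integral_add (pp_integrable hfi ht) (hwi.const_mul t)]
      refine integral_congr_ae (Eventually.of_forall fun x => ?_)
      simp only
      unfold topW
      split_ifs with a b
      · rw [max_eq_left (by linarith)]; ring
      · rw [b]; simp; ring
      · rw [max_eq_right (by linarith)]; ring
    have e2 : ∫ x, q x * g x ∂μ ≤ ∫ x, max (g x - t) 0 ∂μ + t * ∫ x, q x ∂μ := by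
      rw [← integral_const_mul, ← integral_add (pp_integrable hg ht) (hq.const_mul t)]
      refine integral_mono hqg ((pp_integrable hg ht).add (hq.const_mul t)) fun x => ?_
      simp only
      have a1 := le_max_left (g x - t) 0
      have a2 := le_max_right (g x - t) 0
      have a3 : q x * (g x - t) ≤ q x * max (g x - t) 0 := mul_le_mul_of_nonneg_left a1 (hq0 x)
      have a4 : q x * max (g x - t) 0 ≤ 1 * max (g x - t) 0 := mul_le_mul_of_nonneg_right (hq1 x) a2
      nlinarith
    rw [e1]
    have := H t ht
    rw [hqw] at e2
    linarith

lemma exists_mulOp {w : X → ℝ} (hw : Measurable w) (hb : ∀ x, |w x| ≤ 1) :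
    ∃ L : Lp ℝ 1 μ →L[ℝ] Lp ℝ 1 μ, ∀ φ : Lp ℝ 1 μ, (L φ : X → ℝ) =ᵐ[μ] fun x => w x * φ x := by
  have hm : MemLp w ⊤ μ := memLp_top_of_bound hw.aestronglyMeasurable 1 (Eventually.of_forall hb)
  refine ⟨(ContinuousLinearMap.mul ℝ ℝ).holderL μ ⊤ 1 1 (hm.toLp w), fun φ => ?_⟩
  rw [ContinuousLinearMap.holderL_apply_apply]
  filter_upwards [(ContinuousLinearMap.mul ℝ ℝ).coeFn_holder (r := 1) (hm.toLp w) φ,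
    hm.coeFn_toLp] with x h1 h2
  rw [h1, h2]; rfl

end Helpers2

section Helpers3

variable {X : Type*} [MeasurableSpace X] {μ : Measure X}

lemma op_exists {Y : Set X} (hY : MeasurableSet Y) (n : ℕ) (A : ℕ → Set X)
    (hA : ∀ i, MeasurableSet (A i)) (hAf : ∀ i, μ (A i) ≠ ⊤)
    (hAY : ∀ x, ∑ i ∈ Finset.range n, (A i).indicator (fun _ => (1:ℝ)) x
      = Y.indicator (fun _ => (1:ℝ)) x)
    (P : ℕ → X → ℝ) (hPm : ∀ i, Measurable (P i)) (hP0 : ∀ i, 0 ≤ᵐ[μ] P i)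
    (hP1 : ∀ i x, |P i x| ≤ 1) (hPi : ∀ i, Integrable (P i) μ)
    (hPA : ∀ i, ∫ x, P i x ∂μ = μ.real (A i))
    (hPY : ∀ᵐ x ∂μ, ∑ i ∈ Finset.range n, P i x = Y.indicator (fun _ => (1:ℝ)) x) :
    ∃ T L : Lp ℝ 1 μ →L[ℝ] Lp ℝ 1 μ, IsSemiDoublyStochastic T ∧
      (∀ φ : Lp ℝ 1 μ, (L φ : X → ℝ) =ᵐ[μ] fun x => Yᶜ.indicator (fun _ => (1:ℝ)) x * φ x) ∧
      ∀ φ : Lp ℝ 1 μ, T φ = ∑ i ∈ Finset.range n,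
        ((∫ x, P i x * φ x ∂μ) * (μ.real (A i))⁻¹) • indicatorConstLp 1 (hA i) (hAf i) (1:ℝ)
          + L φ := by
  obtain ⟨L, hL⟩ := exists_mulOp (μ := μ) (w := Yᶜ.indicator (fun _ => (1:ℝ)))
    (measurable_const.indicator hY.compl) (fun x => by
      by_cases hx : x ∈ Yᶜ
      · rw [Set.indicator_of_mem hx]; simp
      · rw [Set.indicator_of_notMem hx]; simp)
  choose Q hQ using fun i => exists_mulOp (μ := μ) (hPm i) (hP1 i)
  let T : Lp ℝ 1 μ →L[ℝ] Lp ℝ 1 μ := ∑ i ∈ Finset.range n,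
    ((L1.integralCLM (E := ℝ)).comp (Q i)).smulRight
      ((μ.real (A i))⁻¹ • indicatorConstLp (μ := μ) 1 (hA i) (hAf i) (1:ℝ)) + L
  have hPφ : ∀ i (φ : Lp ℝ 1 μ), Integrable (fun x => P i x * φ x) μ := fun i φ =>
    (L1.integrable_coeFn φ).bdd_mul (c := 1) (hPm i).aestronglyMeasurable
      (Eventually.of_forall (hP1 i))
  have hT : ∀ φ : Lp ℝ 1 μ, T φ = ∑ i ∈ Finset.range n,
        ((∫ x, P i x * φ x ∂μ) * (μ.real (A i))⁻¹) • indicatorConstLp 1 (hA i) (hAf i) (1:ℝ)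
          + L φ := by
    intro φ
    simp only [T, add_apply, sum_apply,
      ContinuousLinearMap.smulRight_apply, ContinuousLinearMap.comp_apply]
    congr 1
    refine Finset.sum_congr rfl fun i _ => ?_
    rw [smul_smul]
    congr 2
    rw [← integral_congr_ae (hQ i φ), ← L1.integral_eq_integral, L1.integral_eq]
  have hTp : ∀ φ : Lp ℝ 1 μ, ∀ᵐ x ∂μ, (T φ : X → ℝ) x = ∑ i ∈ Finset.range n,
        ((∫ x, P i x * φ x ∂μ) * (μ.real (A i))⁻¹) * (A i).indicator (fun _ => (1:ℝ)) x
          + Yᶜ.indicator (fun _ => (1:ℝ)) x * φ x := by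
    intro φ
    rw [hT φ]
    have h1 : ∀ᵐ x ∂μ, ∀ i ∈ Finset.range n,
      ((((∫ x, P i x * φ x ∂μ) * (μ.real (A i))⁻¹) • indicatorConstLp 1 (hA i) (hAf i) (1:ℝ)
        : Lp ℝ 1 μ) : X → ℝ) x =
        ((∫ x, P i x * φ x ∂μ) * (μ.real (A i))⁻¹) * (A i).indicator (fun _ => (1:ℝ)) x := by
      rw [Filter.eventually_all_finset]
      intro i _
      filter_upwards [Lp.coeFn_smul ((∫ x, P i x * φ x ∂μ) * (μ.real (A i))⁻¹)
        (indicatorConstLp (μ := μ) 1 (hA i) (hAf i) (1:ℝ)),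
        indicatorConstLp_coeFn (p := 1) (hs := hA i) (hμs := hAf i) (c := (1:ℝ))] with x a b
      rw [a, Pi.smul_apply, b, smul_eq_mul]
    have h2 := Lp.coeFn_add (∑ i ∈ Finset.range n,
        ((∫ x, P i x * φ x ∂μ) * (μ.real (A i))⁻¹) • indicatorConstLp (μ := μ) 1 (hA i) (hAf i)
          (1:ℝ)) (L φ)
    have h3 := Lp.coeFn_fun_finsetSum (Finset.range n) (fun i =>
        ((∫ x, P i x * φ x ∂μ) * (μ.real (A i))⁻¹) • indicatorConstLp (μ := μ) 1 (hA i) (hAf i)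
          (1:ℝ))
    filter_upwards [h1, h2, h3, hL φ] with x a1 a2 a3 a4
    rw [a2, Pi.add_apply, a3, a4]
    congr 1
    exact Finset.sum_congr rfl a1
  have hP00 : ∀ i, μ.real (A i) = 0 → P i =ᵐ[μ] 0 := by
    intro i hi
    have := hPA i
    rw [hi] at this
    exact (integral_eq_zero_iff_of_nonneg_ae (hP0 i) (hPi i)).1 this
  refine ⟨T, L, ⟨?_, ?_, ?_⟩, hL, hT⟩
  · intro φ hφ
    filter_upwards [hTp φ, hφ] with x h1 h2
    simp only [Pi.zero_apply] at *
    rw [h1]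
    refine add_nonneg (Finset.sum_nonneg fun i _ => ?_) ?_
    · refine mul_nonneg (mul_nonneg (integral_nonneg_of_ae ?_) (inv_nonneg.2 measureReal_nonneg))
        (Set.indicator_nonneg (fun _ _ => zero_le_one) _)
      filter_upwards [hφ, hP0 i] with y b1 b2
      exact mul_nonneg b2 b1
    · exact mul_nonneg (Set.indicator_nonneg (fun _ _ => zero_le_one) _) h2
  · intro φ
    have hYi : Integrable (fun x => Yᶜ.indicator (fun _ => (1:ℝ)) x * φ x) μ :=
      (integrable_congr (hL φ)).1 (L1.integrable_coeFn (L φ))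
    have hAi : ∀ i, Integrable ((A i).indicator (fun _ => (1:ℝ))) μ := fun i =>
      (integrable_indicator_iff (hA i)).2 (integrableOn_const (hAf i))
    rw [integral_congr_ae (hTp φ), integral_add (integrable_finsetSum _ fun i _ =>
      (hAi i).const_mul _) hYi, integral_finsetSum _ fun i _ => (hAi i).const_mul _]
    have e : ∀ i ∈ Finset.range n, ∫ x, ((∫ x, P i x * φ x ∂μ) * (μ.real (A i))⁻¹) *
        (A i).indicator (fun _ => (1:ℝ)) x ∂μ = ∫ x, P i x * φ x ∂μ := by
      intro i _
      rw [integral_const_mul, integral_indicator_const _ (hA i), smul_eq_mul, mul_one, mul_assoc]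
      by_cases hi : μ.real (A i) = 0
      · rw [hi, mul_zero, mul_zero]
        symm
        refine integral_eq_zero_of_ae ?_
        filter_upwards [hP00 i hi] with x hx
        simp [hx]
      · rw [inv_mul_cancel₀ hi, mul_one]
    rw [Finset.sum_congr rfl e, ← integral_finsetSum _ fun i _ => hPφ i φ,
      ← integral_add (integrable_finsetSum _ fun i _ => hPφ i φ) hYi]
    refine integral_congr_ae ?_
    filter_upwards [hPY] with x hx
    rw [← Finset.sum_mul, hx]
    by_cases hxY : x ∈ Y <;> simp [hxY]
  · intro E B hE hEf hB hBf
    have : ∀ᵐ x ∂μ, (T (indicatorConstLp 1 hB hBf.ne (1 : ℝ)) : X → ℝ) x ≤ 1 := by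
      have hind := indicatorConstLp_coeFn (μ := μ) (p := 1) (hs := hB) (hμs := hBf.ne) (c := (1:ℝ))
      filter_upwards [hTp (indicatorConstLp 1 hB hBf.ne (1 : ℝ)), hind] with x h1 h2
      rw [h1, h2]
      have hle : ∀ i ∈ Finset.range n, ((∫ x, P i x * (indicatorConstLp 1 hB hBf.ne (1 : ℝ)
          : Lp ℝ 1 μ) x ∂μ) * (μ.real (A i))⁻¹) * (A i).indicator (fun _ => (1:ℝ)) x
          ≤ (A i).indicator (fun _ => (1:ℝ)) x := by
        intro i _
        refine mul_le_of_le_one_left (Set.indicator_nonneg (fun _ _ => zero_le_one) _) ?_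
        rw [← div_eq_mul_inv]
        refine div_le_one_of_le₀ ?_ measureReal_nonneg
        rw [← hPA i]
        refine integral_mono_ae (hPφ i _) (hPi i) ?_
        filter_upwards [hind, hP0 i] with y b1 b2
        rw [b1]
        refine mul_le_of_le_one_right b2 ?_
        by_cases hy : y ∈ B <;> simp [hy]
      refine (add_le_add_left (Finset.sum_le_sum hle) _).trans ?_
      rw [hAY]
      by_cases hxY : x ∈ Y <;> by_cases hxB : x ∈ B <;> simp [hxY, hxB]
    have hc : Integrable (fun _ : X => (1:ℝ)) (μ.restrict E) := integrableOn_const hEf.ne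
    refine (integral_mono_ae (L1.integrable_coeFn _).restrict hc (ae_restrict_of_ae this)).trans ?_
    simp [measureReal_def]

lemma abel_bound (n : ℕ) (h d : ℕ → ℝ) {C ε : ℝ} (hε : 0 ≤ ε)
    (hC : ∀ i, |h i| ≤ C) (ha : ∀ i j, i ≤ j → j < n → h j ≤ h i)
    (hD : ∀ k, k ≤ n → ∑ i ∈ Finset.range k, d i ≤ ε)
    (hDn : |∑ i ∈ Finset.range n, d i| ≤ ε) :
    ∑ i ∈ Finset.range n, h i * d i ≤ 3 * C * ε := by
  have hC0 : 0 ≤ C := (abs_nonneg _).trans (hC 0)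
  have key : ∀ k, k < n → ∑ i ∈ Finset.range (k+1), h i * d i
      ≤ h k * ∑ i ∈ Finset.range (k+1), d i + (h 0 - h k) * ε := by
    intro k
    induction k with
    | zero => intro _; simp
    | succ k ih =>
      intro hk
      have h1 := ih (by omega)
      have h2 := hD (k+1) (by omega)
      have h3 := ha k (k+1) (by omega) hk
      rw [Finset.sum_range_succ, Finset.sum_range_succ (fun i => d i) (k+1)]
      nlinarith
  rcases n with _ | n
  · simp; positivity
  · have h1 := key n (by omega)
    have h2 : h n * ∑ i ∈ Finset.range (n+1), d i ≤ C * ε := by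
      refine (le_abs_self _).trans ?_
      rw [abs_mul]
      exact mul_le_mul (hC n) hDn (abs_nonneg _) hC0
    have h3 : (h 0 - h n) * ε ≤ (2 * C) * ε := by
      refine mul_le_mul_of_nonneg_right ?_ hε
      have a := abs_le.1 (hC 0)
      have b := abs_le.1 (hC n)
      linarith
    linarith

end Helpers3

section Helpers4

variable {X : Type*} [MeasurableSpace X] {μ : Measure X}

lemma main_step {Y : Set X} (hY : MeasurableSet Y) (hYf : μ Y ≠ ⊤) (n : ℕ) (A : ℕ → Set X)
    (hA : ∀ i, MeasurableSet (A i)) (hAf : ∀ i, μ (A i) ≠ ⊤)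
    (hAY : ∀ x, ∑ i ∈ Finset.range n, (A i).indicator (fun _ => (1:ℝ)) x
      = Y.indicator (fun _ => (1:ℝ)) x)
    (hAn : ∀ i, n ≤ i → A i = ∅)
    (f g : Lp ℝ 1 μ) (hf : 0 ≤ᵐ[μ] f) (c : ℕ → ℝ)
    (hc : ∀ᵐ x ∂μ, ∀ i, x ∈ A i → g x = c i) (hgY : ∀ᵐ x ∂μ, x ∉ Y → g x = 0)
    {ε : ℝ} (hε : 0 ≤ ε)
    (H : ∀ u, 0 ≤ u → ∫ x, max (g x - u) 0 ∂μ ≤ ∫ x in Y, max (f x - u) 0 ∂μ + ε)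
    (H2 : |∫ x, g x ∂μ - ∫ x in Y, f x ∂μ| ≤ ε) (H3 : ∫ x in Yᶜ, f x ∂μ ≤ ε)
    (l : Lp ℝ 1 μ →L[ℝ] ℝ)
    (hanti : ∀ i j, i ≤ j → j < n →
      (μ.real (A j))⁻¹ * l (indicatorConstLp 1 (hA j) (hAf j) (1:ℝ))
        ≤ (μ.real (A i))⁻¹ * l (indicatorConstLp 1 (hA i) (hAf i) (1:ℝ))) :
    ∃ T, IsSemiDoublyStochastic T ∧ l g ≤ l (T f) + 4 * ‖l‖ * ε := by
  have hfm : Measurable (f : X → ℝ) := (Lp.stronglyMeasurable f).measurable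
  have hfi := L1.integrable_coeFn f
  have hgi := L1.integrable_coeFn g
  let ν := μ.restrict Y
  haveI : IsFiniteMeasure ν := ⟨by simpa [ν] using hYf.lt_top⟩
  have hfν : Integrable f ν := hfi.restrict
  let q : ℕ → X → ℝ := fun k x => ∑ i ∈ Finset.range k, (A i).indicator (fun _ => (1:ℝ)) x
  let M : ℕ → ℝ := fun k => ∑ i ∈ Finset.range k, μ.real (A i)
  have hAi : ∀ i, Integrable ((A i).indicator (fun _ => (1:ℝ))) μ := fun i =>
      (integrable_indicator_iff (hA i)).2 (integrableOn_const (hAf i))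
  have hind0 : ∀ i x, 0 ≤ (A i).indicator (fun _ => (1:ℝ)) x := fun i x =>
    Set.indicator_nonneg (fun _ _ => zero_le_one) _
  have hqi : ∀ k, Integrable (q k) μ := fun k => integrable_finsetSum _ fun i _ => hAi i
  have hqm : ∀ k, Measurable (q k) := fun k =>
    Finset.measurable_sum _ fun i _ => measurable_const.indicator (hA i)
  have hqM : ∀ k, ∫ x, q k x ∂μ = M k := by
    intro k
    rw [integral_finsetSum _ fun i _ => hAi i]
    refine Finset.sum_congr rfl fun i _ => ?_
    rw [integral_indicator_const _ (hA i), smul_eq_mul, mul_one]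
  have hq0 : ∀ k x, 0 ≤ q k x := fun k x => Finset.sum_nonneg fun i _ => hind0 i x
  have hqY : ∀ k x, q k x ≤ Y.indicator (fun _ => (1:ℝ)) x := by
    intro k x
    rw [← hAY x]
    rcases le_total k n with h | h
    · exact Finset.sum_le_sum_of_subset_of_nonneg (Finset.range_mono h) fun i _ _ => hind0 i x
    · refine le_of_eq (Finset.sum_subset (Finset.range_mono h) fun i _ hi => ?_).symm
      rw [hAn i (by simpa using hi)]; simp
  have hq1 : ∀ k x, q k x ≤ 1 := fun k x => (hqY k x).trans (by
    by_cases hx : x ∈ Y <;> simp [hx])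
  have hYint : ∫ x, Y.indicator (fun _ => (1:ℝ)) x ∂μ = μ.real Y := by
    rw [integral_indicator_const _ hY, smul_eq_mul, mul_one]
  have hYi : Integrable (Y.indicator (fun _ => (1:ℝ))) μ :=
    (integrable_indicator_iff hY).2 (integrableOn_const hYf)
  have hνu : ν.real Set.univ = μ.real Y := by simp [ν]
  have hM0 : ∀ k, 0 ≤ M k := fun k => Finset.sum_nonneg fun i _ => measureReal_nonneg
  have hM1 : ∀ k, M k ≤ ν.real Set.univ := by
    intro k
    rw [hνu, ← hYint, ← hqM]
    exact integral_mono (hqi k) hYi (hqY k)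
  have hMn : M n = ν.real Set.univ := by
    rw [hνu, ← hYint, ← hqM]
    exact integral_congr_ae (Eventually.of_forall hAY)
  choose w hw hwM using fun k => exists_top (ν := ν) hfm hfν (ae_restrict_of_ae hf)
    (hM0 k) (hM1 k)
  have hwi : ∀ k, Integrable (w k) ν := fun k => (hw k).integrable hfm
  have hwm : ∀ k, Measurable (w k) := fun k => (hw k).measurable hfm
  have hwf : ∀ k, Integrable (fun x => w k x * f x) ν := by
    intro k
    refine hfν.bdd_mul (c := 1) (hwm k).aestronglyMeasurable
      (Eventually.of_forall fun x => ?_)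
    rw [Real.norm_eq_abs, abs_of_nonneg ((hw k).nonneg x)]; exact (hw k).le_one x
  have hw0 : w 0 =ᵐ[ν] 0 := by
    have := hwM 0
    simp only [M, Finset.range_zero, Finset.sum_empty] at this
    exact (integral_eq_zero_iff_of_nonneg (hw 0).nonneg (hwi 0)).1 this
  have hwn : ∀ᵐ x ∂ν, w n x = 1 := by
    have h1 : ∫ x, (1 - w n x) ∂ν = 0 := by
      rw [integral_sub (integrable_const _) (hwi n), hwM, hMn]; simp
    have h2 := (integral_eq_zero_iff_of_nonneg (fun x => sub_nonneg.2 ((hw n).le_one x))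
      ((integrable_const _).sub (hwi n))).1 h1
    filter_upwards [h2] with x hx
    simp only [Pi.zero_apply] at hx
    linarith
  let P : ℕ → X → ℝ := fun i => Y.indicator (fun x => w (i+1) x - w i x)
  have hPint : ∀ i, ∫ x, P i x ∂μ = μ.real (A i) := by
    intro i
    rw [integral_indicator hY, integral_sub (hwi _) (hwi _), hwM, hwM]
    simp [M, Finset.sum_range_succ]
  have hPf : ∀ i, ∫ x, P i x * f x ∂μ = ∫ x, w (i+1) x * f x ∂ν - ∫ x, w i x * f x ∂ν := by
    intro i
    rw [← integral_sub (hwf _) (hwf _), ← integral_indicator hY]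
    congr 1
    ext x
    by_cases hx : x ∈ Y <;> simp [P, hx, sub_mul]
  obtain ⟨T, L, hTs, hL, hT⟩ := op_exists hY n A hA hAf hAY P
    (fun i => ((hwm _).sub (hwm _)).indicator hY)
    (by
      intro i
      have h1 : w i ≤ᵐ[ν] w (i+1) := TopWt.ae_le hfm (hw i) (hw (i+1)) (by
        rw [hwM, hwM]
        simp only [M, Finset.sum_range_succ]
        linarith [measureReal_nonneg (μ := μ) (s := A i)])
      have h2 := (ae_restrict_iff' hY).1 h1
      filter_upwards [h2] with x hx
      by_cases hxY : x ∈ Y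
      · simpa [P, hxY] using hx hxY
      · simp [P, hxY])
    (by
      intro i x
      by_cases hxY : x ∈ Y
      · simp only [P, Set.indicator_of_mem hxY]
        rw [abs_le]
        constructor <;> linarith [(hw i).nonneg x, (hw i).le_one x, (hw (i+1)).nonneg x,
          (hw (i+1)).le_one x]
      · simp [P, hxY])
    (fun i => (integrable_indicator_iff hY).2 ((hwi _).sub (hwi _)))
    hPint
    (by
      filter_upwards [(ae_restrict_iff' hY).1 hw0, (ae_restrict_iff' hY).1 hwn] with x h0 h1
      by_cases hxY : x ∈ Y
      · simp only [P, Set.indicator_of_mem hxY]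
        rw [Finset.sum_range_sub (fun i => w i x), h0 hxY, h1 hxY]; simp
      · simp [P, hxY])
  refine ⟨T, hTs, ?_⟩
  let χ : ℕ → Lp ℝ 1 μ := fun i => indicatorConstLp 1 (hA i) (hAf i) (1:ℝ)
  let h : ℕ → ℝ := fun i => (μ.real (A i))⁻¹ * l (χ i)
  have hχn : ∀ i, ‖χ i‖ = μ.real (A i) := by
    intro i
    simp only [χ]
    rw [norm_indicatorConstLp one_ne_zero ENNReal.one_ne_top]
    simp
  have hlχ : ∀ i, |l (χ i)| ≤ ‖l‖ * μ.real (A i) := by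
    intro i
    rw [← hχn]
    exact l.le_opNorm _
  have hhm : ∀ i, μ.real (A i) * h i = l (χ i) := by
    intro i
    by_cases hi : μ.real (A i) = 0
    · have := hlχ i
      rw [hi, mul_zero] at this
      rw [hi, zero_mul, abs_nonpos_iff.1 this]
    · simp only [h]; field_simp
  have hhC : ∀ i, |h i| ≤ ‖l‖ := by
    intro i
    simp only [h]
    rw [abs_mul, abs_inv, abs_of_nonneg measureReal_nonneg, inv_mul_eq_div]
    exact div_le_of_le_mul₀ measureReal_nonneg (norm_nonneg _) (hlχ i)
  let d : ℕ → ℝ := fun i => c i * μ.real (A i) - ∫ x, P i x * f x ∂μ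
  have hcm : ∀ i, ∫ x, (A i).indicator (fun _ => (1:ℝ)) x * g x ∂μ = c i * μ.real (A i) := by
    intro i
    have : ∫ x, (A i).indicator (fun _ => (1:ℝ)) x * g x ∂μ
        = ∫ x, (A i).indicator (fun _ => c i) x ∂μ := by
      refine integral_congr_ae ?_
      filter_upwards [hc] with x hx
      by_cases hxA : x ∈ A i
      · simp [hxA, hx i hxA]
      · simp [hxA]
    rw [this, integral_indicator_const _ (hA i), smul_eq_mul, mul_comm]
  have hAg : ∀ i, Integrable (fun x => (A i).indicator (fun _ => (1:ℝ)) x * g x) μ := by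
    intro i
    refine hgi.bdd_mul (c := 1) (measurable_const.indicator (hA i)).aestronglyMeasurable
      (Eventually.of_forall fun x => ?_)
    by_cases hx : x ∈ A i <;> simp [hx]
  have hdsum : ∀ k, ∑ i ∈ Finset.range k, d i
      = ∫ x, q k x * g x ∂μ - ∫ x, w k x * f x ∂ν := by
    intro k
    simp only [d]
    rw [Finset.sum_sub_distrib]
    congr 1
    · rw [← Finset.sum_congr rfl fun i _ => hcm i, ← integral_finsetSum _ fun i _ => hAg i]
      simp only [q, Finset.sum_mul]
    · rw [Finset.sum_congr rfl fun i _ => hPf i,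
        Finset.sum_range_sub (fun i => ∫ x, w i x * f x ∂ν)]
      have : ∫ x, w 0 x * f x ∂ν = 0 := by
        refine integral_eq_zero_of_ae ?_
        filter_upwards [hw0] with x hx
        simp [hx]
      rw [this, sub_zero]
  have habel : ∑ i ∈ Finset.range n, h i * d i ≤ 3 * ‖l‖ * ε := by
    refine abel_bound n h d hε hhC hanti ?_ ?_
    · intro k _
      rw [hdsum]
      have := lorenz (μ := μ) (ν := ν) hfm hfν (hw k) hgi (hqi k) (hqm k) (hq0 k) (hq1 k)
        (by rw [hqM, hwM]) hε H
      linarith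
    · rw [hdsum]
      have e1 : ∫ x, q n x * g x ∂μ = ∫ x, g x ∂μ := by
        refine integral_congr_ae ?_
        filter_upwards [hgY] with x hx
        simp only [q, hAY]
        by_cases hxY : x ∈ Y
        · simp [hxY]
        · simp [hxY, hx hxY]
      have e2 : ∫ x, w n x * f x ∂ν = ∫ x in Y, f x ∂μ := by
        refine integral_congr_ae ?_
        filter_upwards [hwn] with x hx
        rw [hx, one_mul]
      rw [e1, e2]; exact H2
  have hg : g = ∑ i ∈ Finset.range n, c i • χ i := by
    apply Lp.ext
    have h3 := Lp.coeFn_fun_finsetSum (Finset.range n) (fun i => c i • χ i)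
    have h4 : ∀ᵐ x ∂μ, ∀ i ∈ Finset.range n, ((c i • χ i : Lp ℝ 1 μ) : X → ℝ) x
        = c i * (A i).indicator (fun _ => (1:ℝ)) x := by
      rw [Filter.eventually_all_finset]
      intro i _
      filter_upwards [Lp.coeFn_smul (c i) (χ i),
        indicatorConstLp_coeFn (p := 1) (hs := hA i) (hμs := hAf i) (c := (1:ℝ))] with x a b
      rw [a, Pi.smul_apply, b, smul_eq_mul]
    filter_upwards [h3, h4, hc, hgY] with x a1 a2 a3 a4
    rw [a1, Finset.sum_congr rfl a2]
    have : ∀ i ∈ Finset.range n, c i * (A i).indicator (fun _ => (1:ℝ)) x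
        = (A i).indicator (fun _ => (1:ℝ)) x * g x := by
      intro i _
      by_cases hxA : x ∈ A i
      · simp [hxA, a3 i hxA]
      · simp [hxA]
    rw [Finset.sum_congr rfl this, ← Finset.sum_mul, hAY]
    by_cases hxY : x ∈ Y
    · simp [hxY]
    · simp [hxY, a4 hxY]
  have hlg : l g = ∑ i ∈ Finset.range n, h i * (c i * μ.real (A i)) := by
    conv_lhs => rw [hg]
    rw [map_sum]
    refine Finset.sum_congr rfl fun i _ => ?_
    rw [map_smul, smul_eq_mul, ← hhm]; ring
  have hlT : l (T f) = ∑ i ∈ Finset.range n, h i * (∫ x, P i x * f x ∂μ) + l (L f) := by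
    rw [hT, map_add, map_sum]
    congr 1
    refine Finset.sum_congr rfl fun i _ => ?_
    rw [map_smul, smul_eq_mul]
    simp only [h, χ]; ring
  have hLn : ‖L f‖ ≤ ε := by
    rw [← L1_integral_le_norm]
    refine le_trans (le_of_eq ?_) H3
    rw [← integral_indicator hY.compl]
    refine integral_congr_ae ?_
    filter_upwards [hL f, hf] with x a b
    rw [a]
    simp only [Pi.zero_apply] at b
    by_cases hxY : x ∈ Y
    · simp [hxY]
    · simp [hxY, abs_of_nonneg b]
  have hlL : |l (L f)| ≤ ‖l‖ * ε :=
    (l.le_opNorm _).trans (mul_le_mul_of_nonneg_left hLn (norm_nonneg _))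
  have hdiff : ∑ i ∈ Finset.range n, h i * d i = ∑ i ∈ Finset.range n, h i * (c i * μ.real (A i))
      - ∑ i ∈ Finset.range n, h i * (∫ x, P i x * f x ∂μ) := by
    rw [← Finset.sum_sub_distrib]
    refine Finset.sum_congr rfl fun i _ => ?_
    simp only [d]; ring
  have := (abs_le.1 hlL).1
  rw [hlg, hlT]
  linarith

lemma sds_convex (f : Lp ℝ 1 μ) :
    Convex ℝ {φ : Lp ℝ 1 μ | ∃ T, IsSemiDoublyStochastic T ∧ φ = T f} := by
  rintro _ ⟨T, hT, rfl⟩ _ ⟨T', hT', rfl⟩ a b ha hb hab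
  have hae : ∀ φ : Lp ℝ 1 μ, ((a • T + b • T') φ : X → ℝ) =ᵐ[μ]
      fun x => a * (T φ : X → ℝ) x + b * (T' φ : X → ℝ) x := by
    intro φ
    have e : (a • T + b • T') φ = a • T φ + b • T' φ := rfl
    rw [e]
    filter_upwards [Lp.coeFn_add (a • T φ) (b • T' φ), Lp.coeFn_smul a (T φ),
      Lp.coeFn_smul b (T' φ)] with x h1 h2 h3
    rw [h1, Pi.add_apply, h2, h3]; rfl
  refine ⟨a • T + b • T', ⟨?_, ?_, ?_⟩, rfl⟩
  · intro φ hφ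
    filter_upwards [hae φ, hT.1 φ hφ, hT'.1 φ hφ] with x h1 h2 h3
    rw [h1]
    exact add_nonneg (mul_nonneg ha h2) (mul_nonneg hb h3)
  · intro φ
    rw [integral_congr_ae (hae φ), integral_add ((L1.integrable_coeFn _).const_mul a)
      ((L1.integrable_coeFn _).const_mul b), integral_const_mul, integral_const_mul,
      hT.2.1, hT'.2.1, ← add_mul, hab, one_mul]
  · intro E B hE hEf hB hBf
    rw [integral_congr_ae (ae_restrict_of_ae (hae _)),
      integral_add ((L1.integrable_coeFn _).restrict.const_mul a)
      ((L1.integrable_coeFn _).restrict.const_mul b), integral_const_mul, integral_const_mul]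
    have h1 := mul_le_mul_of_nonneg_left (hT.2.2 E B hE hEf hB hBf) ha
    have h2 := mul_le_mul_of_nonneg_left (hT'.2.2 E B hE hEf hB hBf) hb
    have h3 : a * (μ E).toReal + b * (μ E).toReal = (μ E).toReal := by
      rw [← add_mul, hab, one_mul]
    linarith

lemma exists_sort (R : Finset ℝ) (H : ℝ → ℝ) : ∃ e : Fin R.card ≃ R,
    ∀ i j, i ≤ j → H (e j) ≤ H (e i) := by
  let v := R.equivFin.symm
  let σ := Tuple.sort (fun i => - H (v i))
  refine ⟨σ.trans v, fun i j hij => ?_⟩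
  have := Tuple.monotone_sort (fun i => - H (v i)) hij
  simp only [Function.comp_apply, neg_le_neg_iff] at this
  exact this

lemma approx_step [SigmaFinite μ] (f g : Lp ℝ 1 μ) (hf : 0 ≤ᵐ[μ] f)
    (H : ∀ u, 0 ≤ u → ∫ x, max (g x - u) 0 ∂μ ≤ ∫ x, max (f x - u) 0 ∂μ)
    (H2 : ∫ x, g x ∂μ = ∫ x, f x ∂μ) (l : Lp ℝ 1 μ →L[ℝ] ℝ) {η : ℝ} (hη : 0 < η) :
    ∃ T, IsSemiDoublyStochastic T ∧ l g ≤ l (T f) + 9 * ‖l‖ * η := by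
  obtain ⟨g', hg's, hgg'⟩ := Metric.mem_closure_iff.1
    (Lp.simpleFunc.dense (E := ℝ) (p := 1) (μ := μ) ENNReal.one_ne_top g) η hη
  rw [dist_eq_norm] at hgg'
  let s := Lp.simpleFunc.toSimpleFunc ⟨g', hg's⟩
  have hsg : s =ᵐ[μ] g' := Lp.simpleFunc.toSimpleFunc_eq_toFun ⟨g', hg's⟩
  have hsi : Integrable s μ := memLp_one_iff_integrable.1 (Lp.simpleFunc.memLp ⟨g', hg's⟩)
  have hsup := SimpleFunc.measure_support_lt_top_of_integrable s hsi
  have hfi := L1.integrable_coeFn f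
  obtain ⟨N, hN⟩ : ∃ N, ∫ x in (spanningSets μ N)ᶜ, f x ∂μ < η := by
    have := tendsto_setIntegral_of_antitone (μ := μ) (f := f)
      (s := fun n => (spanningSets μ n)ᶜ)
      (fun n => (measurableSet_spanningSets μ n).compl)
      (fun a b hab => Set.compl_subset_compl.2 (monotone_spanningSets μ hab))
      ⟨0, hfi.integrableOn⟩
    rw [← Set.compl_iUnion, iUnion_spanningSets, Set.compl_univ, setIntegral_empty] at this
    exact (this.eventually_lt_const hη).exists
  let Y := Function.support s ∪ spanningSets μ N
  have hY : MeasurableSet Y := s.measurableSet_support.union (measurableSet_spanningSets μ N)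
  have hYf : μ Y ≠ ⊤ :=
    (measure_union_lt_top hsup (measure_spanningSets_lt_top μ N)).ne
  have hYc : ∫ x in Yᶜ, f x ∂μ ≤ η := by
    refine le_trans ?_ hN.le
    refine setIntegral_mono_set hfi.integrableOn (ae_restrict_of_ae hf) ?_
    exact (Set.compl_subset_compl.2 Set.subset_union_right).eventuallyLE
  let A0 : ℝ → Set X := fun y => s ⁻¹' {y} ∩ Y
  have hA0 : ∀ y, MeasurableSet (A0 y) := fun y => (s.measurableSet_fiber y).inter hY
  have hA0f : ∀ y, μ (A0 y) ≠ ⊤ := fun y => measure_ne_top_of_subset Set.inter_subset_right hYf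
  obtain ⟨e, he⟩ := exists_sort s.range fun y =>
    (μ.real (A0 y))⁻¹ * l (indicatorConstLp 1 (hA0 y) (hA0f y) (1:ℝ))
  let n := s.range.card
  let c : ℕ → ℝ := fun i => if h : i < n then (e ⟨i, h⟩ : ℝ) else 0
  let A : ℕ → Set X := fun i => if i < n then A0 (c i) else ∅
  have hAlt : ∀ i, i < n → A i = A0 (c i) := fun i hi => by simp [A, hi]
  have hA : ∀ i, MeasurableSet (A i) := by
    intro i
    by_cases hi : i < n
    · rw [hAlt i hi]; exact hA0 _
    · simp [A, hi]
  have hAf : ∀ i, μ (A i) ≠ ⊤ := by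
    intro i
    by_cases hi : i < n
    · rw [hAlt i hi]; exact hA0f _
    · simp [A, hi]
  have hcongr : ∀ (S S' : Set X) (hS : MeasurableSet S) (hS' : MeasurableSet S')
      (hf : μ S ≠ ⊤) (hf' : μ S' ≠ ⊤), S = S' →
      (μ.real S)⁻¹ * l (indicatorConstLp 1 hS hf (1:ℝ))
        = (μ.real S')⁻¹ * l (indicatorConstLp 1 hS' hf' (1:ℝ)) := by
    intro S S' _ _ _ _ h
    subst h; rfl
  obtain ⟨T, hT, hle⟩ := main_step hY hYf n A hA hAf
    (by
      intro x
      rw [← Fin.sum_univ_eq_sum_range (fun i => (A i).indicator (fun _ => (1:ℝ)) x) n]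
      have h1 : ∀ i : Fin n, (A i).indicator (fun _ => (1:ℝ)) x
          = (fun y : s.range => (A0 y).indicator (fun _ => (1:ℝ)) x) (e i) := by
        intro i
        rw [hAlt i i.2]
        simp [c]
      have h2 : ∑ i : Fin n, (fun y : s.range => (A0 y).indicator (fun _ => (1:ℝ)) x) (e i)
          = ∑ y : s.range, (A0 y).indicator (fun _ => (1:ℝ)) x :=
        Equiv.sum_comp e (fun y : s.range => (A0 y).indicator (fun _ => (1:ℝ)) x)
      rw [Finset.sum_congr rfl fun i _ => h1 i, h2,
        Finset.sum_eq_single ⟨s x, s.mem_range_self x⟩]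
      · by_cases hxY : x ∈ Y <;> simp [A0, hxY]
      · intro b _ hb
        refine Set.indicator_of_notMem ?_ _
        rintro ⟨hx, _⟩
        apply hb
        ext
        simpa using hx.symm
      · simp)
    (fun i hi => by simp [A, not_lt.2 hi])
    f g' hf c
    (by
      filter_upwards [hsg] with x hx i hxi
      by_cases hi : i < n
      · rw [hAlt i hi] at hxi
        rw [← hx]
        simpa using hxi.1
      · simp [A, hi] at hxi)
    (by
      filter_upwards [hsg] with x hx hxY
      rw [← hx]
      by_contra hcon
      exact hxY (Or.inl hcon))
    (ε := 2 * η) (by linarith)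
    (by
      intro u hu
      have h1 := pp_lip g' g hu
      rw [norm_sub_rev] at h1
      have h2 := H u hu
      have h3 := integral_add_compl hY (pp_integrable hfi hu)
      have h4 : ∫ x in Yᶜ, max (f x - u) 0 ∂μ ≤ ∫ x in Yᶜ, f x ∂μ := by
        refine integral_mono_ae (pp_integrable hfi hu).restrict hfi.restrict
          (ae_restrict_of_ae ?_)
        filter_upwards [hf] with x hx
        exact max_le (by linarith) hx
      linarith)
    (by
      have h1 := int_lip g' g
      rw [norm_sub_rev] at h1
      have h3 := integral_add_compl hY hfi
      have h4 : 0 ≤ ∫ x in Yᶜ, f x ∂μ := integral_nonneg_of_ae (ae_restrict_of_ae hf)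
      rw [abs_le] at h1 ⊢
      constructor <;> linarith)
    (by linarith)
    l
    (by
      intro i j hij hj
      have hi : i < n := lt_of_le_of_lt hij hj
      have := he ⟨i, hi⟩ ⟨j, hj⟩ hij
      rw [hcongr (A j) (A0 (e ⟨j, hj⟩)) (hA j) (hA0 _) (hAf j) (hA0f _)
          (by rw [hAlt j hj]; simp [c, hj]),
        hcongr (A i) (A0 (e ⟨i, hi⟩)) (hA i) (hA0 _) (hAf i) (hA0f _)
          (by rw [hAlt i hi]; simp [c, hi])]
      exact this)
  refine ⟨T, hT, ?_⟩
  have h1 : l g - l g' ≤ ‖l‖ * η := by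
    rw [← map_sub]
    exact (le_abs_self _).trans ((l.le_opNorm _).trans
      (mul_le_mul_of_nonneg_left hgg'.le (norm_nonneg _)))
  linarith

end Helpers4

/-- **Characterization of majorization by semi-doubly stochastic operators.**  Let `(X,μ)` be
σ-finite and `f, g ∈ L¹(X,μ)` nonnegative.  Then `g ≺ f`, i.e.
`∫_u^∞ μ{g > t} dt ≤ ∫_u^∞ μ{f > t} dt` for every `u ≥ 0` together with
`∫ g dμ = ∫ f dμ`, holds if and only if there is a sequence `(Sₖ)` of semi-doubly
stochastic operators on `L¹(X,μ)` with `‖Sₖf − g‖₁ → 0`. -/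
theorem majorization_iff_semiDoublyStochastic_approx
    {X : Type*} [MeasurableSpace X] (μ : Measure X) [SigmaFinite μ]
    (f g : Lp ℝ 1 μ) (hf : 0 ≤ᵐ[μ] (f : X → ℝ)) (hg : 0 ≤ᵐ[μ] (g : X → ℝ)) :
    ((∀ u : ℝ, 0 ≤ u →
        ∫⁻ t in Set.Ioi u, μ {x | (g : X → ℝ) x > t} ∂(volume : Measure ℝ)
          ≤ ∫⁻ t in Set.Ioi u, μ {x | (f : X → ℝ) x > t} ∂(volume : Measure ℝ)) ∧
      ∫ x, (g : X → ℝ) x ∂μ = ∫ x, (f : X → ℝ) x ∂μ)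
    ↔
    (∃ S : ℕ → (Lp ℝ 1 μ →L[ℝ] Lp ℝ 1 μ),
      (∀ k, IsSemiDoublyStochastic (S k)) ∧
      Tendsto (fun k => ‖S k f - g‖) atTop (𝓝 0)) := by
  have hfi := L1.integrable_coeFn f
  have hgi := L1.integrable_coeFn g
  constructor
  · rintro ⟨H, H2⟩
    have H' : ∀ u, 0 ≤ u → ∫ x, max (g x - u) 0 ∂μ ≤ ∫ x, max (f x - u) 0 ∂μ := by
      intro u hu
      have := H u hu
      rw [layer hgi hu, layer hfi hu] at this
      exact (ENNReal.ofReal_le_ofReal_iff (integral_nonneg fun x => le_max_right _ _)).1 this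
    have hmem : g ∈ closure {φ : Lp ℝ 1 μ | ∃ T, IsSemiDoublyStochastic T ∧ φ = T f} := by
      by_contra hcon
      obtain ⟨l, s, h1, h2⟩ := geometric_hahn_banach_closed_point
        (sds_convex f).closure isClosed_closure hcon
      have hδ : 0 < l g - s := sub_pos.2 h2
      have hC : 0 ≤ ‖l‖ := norm_nonneg l
      obtain ⟨T, hT, hle⟩ := approx_step f g hf H' H2 l
        (η := (l g - s) / (9 * ‖l‖ + 1)) (by positivity)
      have h3 := h1 (T f) (subset_closure ⟨T, hT, rfl⟩)
      have h4 : 9 * ‖l‖ * ((l g - s) / (9 * ‖l‖ + 1)) ≤ l g - s := by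
        rw [mul_div_assoc', div_le_iff₀ (by positivity)]
        nlinarith
      linarith
    obtain ⟨x, hx, hlim⟩ := mem_closure_iff_seq_limit.1 hmem
    choose S hS hxS using hx
    refine ⟨S, hS, ?_⟩
    have := tendsto_iff_norm_sub_tendsto_zero.1 hlim
    simpa [← hxS] using this
  · rintro ⟨S, hS, hlim⟩
    constructor
    · intro u hu
      rw [layer hgi hu, layer hfi hu]
      refine ENNReal.ofReal_le_ofReal ?_
      have h1 : ∀ k, ∫ x, max (g x - u) 0 ∂μ ≤ ∫ x, max (f x - u) 0 ∂μ + ‖S k f - g‖ := by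
        intro k
        have a := pp_lip g (S k f) hu
        have b := sds_pp (hS k) (φ := f) hu
        rw [norm_sub_rev] at a
        linarith
      have h2 := ge_of_tendsto' (hlim.const_add _) h1
      simpa using h2
    · have h1 : ∀ k, |∫ x, f x ∂μ - ∫ x, g x ∂μ| ≤ ‖S k f - g‖ := by
        intro k
        rw [← (hS k).2.1 f]
        exact int_lip _ _
      have h2 := ge_of_tendsto' hlim h1
      have := abs_nonpos_iff.1 h2
      linarith
end
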